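/- Write λ_b = (λ₁ > λ₂ > ⋯ > λ_ℓ > 0). Then Sp(b) is isomorphic, as a module over the quiver Hecke algebra, to the head (maximal semisimple quotient) of the convolution product Sp((λ_ℓ)) ∘ ⋯ ∘ Sp((λ₂)) ∘ Sp((λ₁)), where Sp((k)) denotes the module Sp(b') for the crystal element b' with λ_{b'} the one-row strict partition (k). -/

import Mathlib

open scoped Classical

namespace QHA

variable (k : Type) [Field k]

/-- Generators of the quiver Hecke algebra `R(β)` on `m` strands with vertex set
`Fin n`: the idempotents `e(ν)`, the polynomial generators `x_p` and the
intertwiners `τ_j` (acting on strands `j`, `j+1`, 0-based). -/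
inductive Gen (n m : ℕ) : Type
  | e (ν : Fin m → Fin n) : Gen n m
  | x (p : Fin m) : Gen n m
  | t (j : ℕ) (h : j + 1 < m) : Gen n m

/-- The free algebra on the generators. -/
abbrev FA (n m : ℕ) := FreeAlgebra k (Gen n m)

variable {n m : ℕ}

noncomputable def Eg (ν : Fin m → Fin n) : FA k n m := FreeAlgebra.ι k (Gen.e ν)
noncomputable def Xg (p : Fin m) : FA k n m := FreeAlgebra.ι k (Gen.x p)
noncomputable def Tg (j : ℕ) (h : j + 1 < m) : FA k n m := FreeAlgebra.ι k (Gen.t j h)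

/-- The transposition of the strands `j`, `j+1` (0-based). -/
def posSwap (j : ℕ) (h : j + 1 < m) : Equiv.Perm (Fin m) :=
  Equiv.swap ⟨j, Nat.lt_of_succ_lt h⟩ ⟨j + 1, h⟩

/-- The place-permutation `s_j ν` of a sequence `ν`. -/
def swapSeq (j : ℕ) (h : j + 1 < m) (ν : Fin m → Fin n) : Fin m → Fin n :=
  ν ∘ posSwap j h

/-- Evaluation of a two-variable polynomial `p(u,v)` at two elements of a
(possibly noncommutative) `k`-algebra, as `Σ t_{p,q} a^p b^q`. -/
noncomputable def eval2 {A : Type} [Ring A] [Algebra k A]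
    (p : MvPolynomial (Fin 2) k) (a b : A) : A :=
  ∑ d ∈ p.support, algebraMap k A (MvPolynomial.coeff d p) * (a ^ d 0 * b ^ d 1)

/-- Evaluation of a three-variable polynomial. -/
noncomputable def eval3 {A : Type} [Ring A] [Algebra k A]
    (p : MvPolynomial (Fin 3) k) (a b c : A) : A :=
  ∑ d ∈ p.support, algebraMap k A (MvPolynomial.coeff d p) * (a ^ d 0 * b ^ d 1 * c ^ d 2)

/-- For `p = Q(u,v)`, the polynomial `(Q(u,v) - Q(w,v))/(u - w)` in the three
variables `u = X 0`, `v = X 1`, `w = X 2` (exact division by the monic `u - w`). -/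
noncomputable def Qbar (p : MvPolynomial (Fin 2) k) : MvPolynomial (Fin 3) k :=
  (MvPolynomial.finSuccEquiv k 2).symm
    (Polynomial.divByMonic
      ((MvPolynomial.finSuccEquiv k 2)
        (MvPolynomial.rename (fun i : Fin 2 => if i = 0 then (0 : Fin 3) else 1) p -
          MvPolynomial.rename (fun i : Fin 2 => if i = 0 then (2 : Fin 3) else 1) p))
      (Polynomial.X - Polynomial.C (MvPolynomial.X 1)))

/-- Admissibility of the family `Q_{i,j}(u,v)` of polynomials with respect to the
(symmetrizable) Cartan matrix `A` and symmetrizing integers `d`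
(so `(α_i, α_j) = d_i A_{i j}`):
`Q_{i,i} = 0`; `Q_{j,i}(u,v) = Q_{i,j}(v,u)`; `Q_{i,j} = 1` whenever `(α_i,α_j) = 0`
(`i ≠ j`); `Q_{i,j}` is supported on `(p,q)` with
`(α_i,α_i) p + (α_j,α_j) q = -2(α_i,α_j)`; and `t_{i,j;-a_{ij},0} ≠ 0`. -/
def QAdmissible (A : Fin n → Fin n → ℤ) (d : Fin n → ℤ)
    (Q : Fin n → Fin n → MvPolynomial (Fin 2) k) : Prop :=
  (∀ i, Q i i = 0) ∧
  (∀ i j, Q j i = MvPolynomial.rename (Equiv.swap (0 : Fin 2) 1) (Q i j)) ∧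
  (∀ i j, i ≠ j → d i * A i j = 0 → Q i j = 1) ∧
  (∀ i j, i ≠ j → ∀ dd ∈ (Q i j).support,
    (2 * d i) * (dd 0 : ℤ) + (2 * d j) * (dd 1 : ℤ) = -2 * (d i * A i j)) ∧
  (∀ i j, i ≠ j →
    MvPolynomial.coeff (Finsupp.single (0 : Fin 2) (-(A i j)).toNat) (Q i j) ≠ 0)

/-- The defining relations of the quiver Hecke algebra `R(β)`, where
`S ⊆ I^m` is the set of admissible sequences (`I^β`; `e(ν) = 0` for `ν ∉ S`). -/
inductive Rel (Q : Fin n → Fin n → MvPolynomial (Fin 2) k) (S : Set (Fin m → Fin n)) :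
    FA k n m → FA k n m → Prop
  | e_orth (ν ν' : Fin m → Fin n) (hne : ν ≠ ν') : Rel Q S (Eg k ν * Eg k ν') 0
  | e_idem (ν : Fin m → Fin n) : Rel Q S (Eg k ν * Eg k ν) (Eg k ν)
  | e_sum : Rel Q S (∑ ν : Fin m → Fin n, Eg k ν) 1
  | e_out (ν : Fin m → Fin n) (hν : ν ∉ S) : Rel Q S (Eg k ν) 0
  | xx (p q : Fin m) : Rel Q S (Xg k p * Xg k q) (Xg k q * Xg k p)
  | xe (p : Fin m) (ν : Fin m → Fin n) : Rel Q S (Xg k p * Eg k ν) (Eg k ν * Xg k p)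
  | te (j : ℕ) (h : j + 1 < m) (ν : Fin m → Fin n) :
      Rel Q S (Tg k j h * Eg k ν) (Eg k (swapSeq j h ν) * Tg k j h)
  | tt (a : ℕ) (ha : a + 1 < m) (b : ℕ) (hb : b + 1 < m) (hab : a + 1 < b ∨ b + 1 < a) :
      Rel Q S (Tg k a ha * Tg k b hb) (Tg k b hb * Tg k a ha)
  | tsq (j : ℕ) (h : j + 1 < m) (ν : Fin m → Fin n) :
      Rel Q S (Tg k j h * Tg k j h * Eg k ν)
        (eval2 k (Q (ν ⟨j, Nat.lt_of_succ_lt h⟩) (ν ⟨j + 1, h⟩))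
          (Xg k ⟨j, Nat.lt_of_succ_lt h⟩) (Xg k ⟨j + 1, h⟩) * Eg k ν)
  | tx_left (j : ℕ) (h : j + 1 < m) (ν : Fin m → Fin n)
      (hv : ν ⟨j, Nat.lt_of_succ_lt h⟩ = ν ⟨j + 1, h⟩) :
      Rel Q S (Tg k j h * Xg k ⟨j, Nat.lt_of_succ_lt h⟩ * Eg k ν)
        (Xg k ⟨j + 1, h⟩ * Tg k j h * Eg k ν - Eg k ν)
  | tx_right (j : ℕ) (h : j + 1 < m) (ν : Fin m → Fin n)
      (hv : ν ⟨j, Nat.lt_of_succ_lt h⟩ = ν ⟨j + 1, h⟩) :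
      Rel Q S (Tg k j h * Xg k ⟨j + 1, h⟩ * Eg k ν)
        (Xg k ⟨j, Nat.lt_of_succ_lt h⟩ * Tg k j h * Eg k ν + Eg k ν)
  | tx_comm (j : ℕ) (h : j + 1 < m) (ν : Fin m → Fin n) (p : Fin m)
      (hcase : ν ⟨j, Nat.lt_of_succ_lt h⟩ ≠ ν ⟨j + 1, h⟩ ∨ ((p : ℕ) ≠ j ∧ (p : ℕ) ≠ j + 1)) :
      Rel Q S (Tg k j h * Xg k p * Eg k ν) (Xg k (posSwap j h p) * Tg k j h * Eg k ν)
  | braid_ne (j : ℕ) (h1 : j + 1 < m) (h2 : j + 2 < m) (ν : Fin m → Fin n)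
      (hv : ν ⟨j, by omega⟩ ≠ ν ⟨j + 2, h2⟩) :
      Rel Q S
        (Tg k (j + 1) (by omega) * Tg k j h1 * Tg k (j + 1) (by omega) * Eg k ν)
        (Tg k j h1 * Tg k (j + 1) (by omega) * Tg k j h1 * Eg k ν)
  | braid_eq (j : ℕ) (h1 : j + 1 < m) (h2 : j + 2 < m) (ν : Fin m → Fin n)
      (hv : ν ⟨j, by omega⟩ = ν ⟨j + 2, h2⟩) :
      Rel Q S
        (Tg k (j + 1) (by omega) * Tg k j h1 * Tg k (j + 1) (by omega) * Eg k ν)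
        (Tg k j h1 * Tg k (j + 1) (by omega) * Tg k j h1 * Eg k ν +
          eval3 k (Qbar k (Q (ν ⟨j, by omega⟩) (ν ⟨j + 1, h1⟩)))
            (Xg k ⟨j, by omega⟩) (Xg k ⟨j + 1, h1⟩) (Xg k ⟨j + 2, h2⟩) * Eg k ν)

/-- The extra cyclotomic relations `x_m^{⟨h_{ν_m}, Λ⟩} e(ν) = 0` (`ν ∈ I^β`),
where `Λ` is written in fundamental-weight coordinates, so `⟨h_i, Λ⟩ = Λ i`. -/
inductive CycRel (Λ : Fin n → ℤ) (S : Set (Fin m → Fin n)) :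
    FA k n m → FA k n m → Prop
  | cyc (ν : Fin m → Fin n) (hν : ν ∈ S) (p : Fin m) (hp : (p : ℕ) + 1 = m) :
      CycRel Λ S (Xg k p ^ (Λ (ν p)).toNat * Eg k ν) 0

/-- Relations of the cyclotomic quiver Hecke algebra `R^Λ(β)`. -/
def CRel (Q : Fin n → Fin n → MvPolynomial (Fin 2) k) (S : Set (Fin m → Fin n))
    (Λ : Fin n → ℤ) : FA k n m → FA k n m → Prop :=
  fun a b => Rel k Q S a b ∨ CycRel k Λ S a b

/-- The `j`-th column of the Cartan matrix: the simple root `α_j` written in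
fundamental-weight coordinates (`⟨h_i, α_j⟩ = A i j`). -/
def αcol (A : Fin n → Fin n → ℤ) (j : Fin n) : Fin n → ℤ := fun i => A i j

/-- `FPath A Λ [i₁, …, i_ℓ] ξ` means `f̃_{i₁} ⋯ f̃_{i_ℓ} Λ = ξ` in the
minuscule crystal realized on the Weyl orbit of `Λ`:
`f̃_j μ = μ - α_j` whenever `⟨h_j, μ⟩ = 1` (and is undefined otherwise). -/
inductive FPath (A : Fin n → Fin n → ℤ) (Λ : Fin n → ℤ) :
    List (Fin n) → (Fin n → ℤ) → Prop
  | nil : FPath A Λ [] Λ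
  | cons (j : Fin n) (l : List (Fin n)) (ξ : Fin n → ℤ) :
      FPath A Λ l ξ → ξ j = 1 → FPath A Λ (j :: l) (ξ - αcol A j)

/-- The simple reflection `s_j μ = μ - ⟨h_j, μ⟩ α_j` on the weight lattice. -/
def sRef (A : Fin n → Fin n → ℤ) (j : Fin n) (μ : Fin n → ℤ) : Fin n → ℤ :=
  fun i => μ i - μ j * A i j

/-- The Weyl group orbit of `Λ` (the Weyl group being generated by the
involutions `s_j`, its orbit consists of images under words in the `s_j`). -/
def orbitW (A : Fin n → Fin n → ℤ) (Λ : Fin n → ℤ) : Set (Fin n → ℤ) :=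
  {ξ | ∃ l : List (Fin n), l.foldr (sRef A) Λ = ξ}

end QHA

namespace QHA

variable (k : Type) [Field k]

/-- The Cartan matrix of type `Bₙ` (0-based labeling; the first node carries the
short simple root: `a_{1,2} = -2`, `a_{2,1} = -1` in 1-based labels, and
`1 — 2 — ⋯ — n` is a chain). -/
def AB (n : ℕ) : Fin n → Fin n → ℤ := fun i j =>
  if i = j then 2
  else if (i : ℕ) = 0 ∧ (j : ℕ) = 1 then -2
  else if (i : ℕ) + 1 = (j : ℕ) ∨ (j : ℕ) + 1 = (i : ℕ) then -1
  else 0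

/-- The symmetrizing integers of type `Bₙ`: `d₁ = 1` and `d_i = 2` for `i ≥ 2`. -/
def dB (n : ℕ) : Fin n → ℤ := fun i => if (i : ℕ) = 0 then 1 else 2

/-- The shifted Young diagram of a strict partition `l = (λ₁ > λ₂ > ⋯)`,
as the set of (1-based) boxes `(i,j)` with `1 ≤ i ≤ ℓ`, `i ≤ j ≤ λᵢ + i - 1`. -/
def diagram (l : List ℕ) : Set (ℕ × ℕ) :=
  {b | b.1 - 1 < l.length ∧ 1 ≤ b.1 ∧ b.1 ≤ b.2 ∧ b.2 + 1 ≤ l.getD (b.1 - 1) 0 + b.1}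

/-- The shifted Young diagram as a finset. -/
def diagFinset (l : List ℕ) : Finset (ℕ × ℕ) :=
  (Finset.range l.length).biUnion fun i =>
    (Finset.Icc (i + 1) (l.getD i 0 + i)).image fun j => (i + 1, j)

/-- The residue `res(i,j) = j - i + 1` of a box. -/
def resBox (b : ℕ × ℕ) : ℕ := b.2 + 1 - b.1

/-- The residue of a box as an element of `I = Fin n` (`0`-based:
the box `(i,j)` has `0`-based residue `j - i`). -/
def resFin (n : ℕ) (hn : 0 < n) (b : ℕ × ℕ) : Fin n :=
  ⟨min (b.2 - b.1) (n - 1), by omega⟩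

/-- `f : Fin N → ℕ × ℕ` is a standard tableau of shifted shape `l`, where `f k` is
the box containing the entry `k+1`. -/
def IsSYT (l : List ℕ) (N : ℕ) (f : Fin N → ℕ × ℕ) : Prop :=
  Function.Injective f ∧ Set.range f = diagram l ∧
    (∀ a b : Fin N, (f a).1 = (f b).1 → (f a).2 < (f b).2 → a < b) ∧
    (∀ a b : Fin N, (f a).2 = (f b).2 → (f a).1 < (f b).1 → a < b)

/-- The residue sequence `res(T) = (res(b_N), …, res(b₁)) ∈ I^N` of a tableau. -/
def resSeq (n : ℕ) (hn : 0 < n) {N : ℕ} (f : Fin N → ℕ × ℕ) : Fin N → Fin n :=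
  fun p => resFin n hn (f p.rev)

/-- The weight `wt(λ) = Λ₁ - Σ_{b ∈ λ} α_{res(b)}`, in fundamental-weight
coordinates, of type `Bₙ`. -/
noncomputable def wtP (n : ℕ) (hn : 0 < n) (l : List ℕ) : Fin n → ℤ :=
  Pi.single ⟨0, hn⟩ 1 - ∑ b ∈ diagFinset l, αcol (AB n) (resFin n hn b)

/-- Exchanging in `T` the entries occupying positions `j`, `j+1` of the residue
sequence, i.e. the entries `N-j` and `N-j-1`. -/
def swapEnt {N : ℕ} (j : ℕ) (h : j + 1 < N) (f : Fin N → ℕ × ℕ) : Fin N → ℕ × ℕ :=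
  f ∘ Equiv.swap (Fin.rev ⟨j, Nat.lt_of_succ_lt h⟩) (Fin.rev ⟨j + 1, h⟩)

section Ops

variable {N : ℕ} (n : ℕ) (hn : 0 < n) (P : (Fin N → ℕ × ℕ) → Prop)

/-- The vector space with basis the tableaux satisfying `P`. -/
abbrev TabV : Type := {f : Fin N → ℕ × ℕ // P f} → k

/-- The prescribed action of `e(μ)`: projection onto the span of the tableaux
with residue sequence `μ`. -/
noncomputable def eOpTab (μ : Fin N → Fin n) : Module.End k (TabV k P) :=
  LinearMap.pi fun T => if resSeq n hn T.val = μ then LinearMap.proj T else 0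

/-- The prescribed action of `τ_j`: `T ↦ s_j T` if `s_j T` still satisfies `P`,
and `0` otherwise. -/
noncomputable def tOpTab (j : ℕ) (h : j + 1 < N) : Module.End k (TabV k P) :=
  LinearMap.pi fun T =>
    if hh : P (swapEnt j h T.val) then
      LinearMap.proj (⟨swapEnt j h T.val, hh⟩ : {f : Fin N → ℕ × ℕ // P f}) else 0

end Ops

section
variable {n : ℕ} (A : Fin n → Fin n → ℤ) (Λ ξ : Fin n → ℤ) (ℓ : ℕ)

/-- `I^β` for `β = Λ - ξ`. -/
def Iβ : Set (Fin ℓ → Fin n) :=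
  {ν | ∑ p : Fin ℓ, αcol A (ν p) = fun i => Λ i - ξ i}
end

end QHA

namespace QHA

section Conv

variable (k : Type) [Field k] (n : ℕ) (hn : 0 < n)
  (Q : Fin n → Fin n → MvPolynomial (Fin 2) k) (l : List ℕ)

/-- The convolution product `Sp((λ_ℓ)) ∘ ⋯ ∘ Sp((λ₂)) ∘ Sp((λ₁))` is induced from
the outer tensor product of the one-dimensional modules `Sp((λ_t))` over the tensor
product of the block subalgebras.  The `t`-th block (0-based, `t < ℓ`) occupies the
positions `blockStart t, …, blockStart t + blockSize t - 1`, where the blocks are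
ordered `λ_ℓ, …, λ₂, λ₁`. -/
def blockStart (t : ℕ) : ℕ := (l.reverse.take t).sum

def blockSize (t : ℕ) : ℕ := l.reverse.getD t 0

/-- The residue sequence of the unique standard tableau of the one-row shape
`(blockSize t)`: position `q` is occupied by the box `(1, blockSize t - q)`. -/
def localRes (t : ℕ) (q : Fin (blockSize l t)) : Fin n :=
  resFin n hn (1, blockSize l t - (q : ℕ))

/-- `ν` agrees with the local sequence `μ` on the `t`-th block. -/
def BlockMatch (t : ℕ) (μ : Fin (blockSize l t) → Fin n)
    (ν : Fin l.sum → Fin n) : Prop :=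
  ∀ (q : Fin (blockSize l t)) (hq : blockStart l t + (q : ℕ) < l.sum),
    ν ⟨blockStart l t + (q : ℕ), hq⟩ = μ q

/-- The image of the idempotent `e(μ)` of the `t`-th block subalgebra in `R(β)`:
`Σ e(ν)`, the sum over the `ν` agreeing with `μ` on the block. -/
noncomputable def imgE (t : ℕ) (μ : Fin (blockSize l t) → Fin n) :
    RingQuot (Rel k Q (Set.univ : Set (Fin l.sum → Fin n))) :=
  RingQuot.mkAlgHom k (Rel k Q (Set.univ : Set (Fin l.sum → Fin n)))
    (∑ ν ∈ Finset.univ.filter (BlockMatch n l t μ), Eg k ν)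

/-- Positions `j` and `j+1` lie in a common block. -/
def sameBlock (j : ℕ) : Prop :=
  ∃ t, blockStart l t ≤ j ∧ j + 1 < blockStart l t + blockSize l t

/-- The left ideal presenting the convolution product
`R(β)e(β_ℓ,…,β₁) ⊗_{R(β_ℓ) ⊗ ⋯ ⊗ R(β₁)} (Sp((λ_ℓ)) ⊠ ⋯ ⊠ Sp((λ₁)))` as a cyclic
left `R(β)`-module: each generator of a block subalgebra, minus the scalar by which
it acts on the corresponding one-dimensional module `Sp((λ_t))`, is annihilated. -/
noncomputable def convIdeal :
    Submodule (RingQuot (Rel k Q (Set.univ : Set (Fin l.sum → Fin n))))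
      (RingQuot (Rel k Q (Set.univ : Set (Fin l.sum → Fin n)))) :=
  Submodule.span _
    ({z | ∃ (t : ℕ) (_ : t < l.length) (μ : Fin (blockSize l t) → Fin n),
        z = imgE k n Q l t μ -
          (if (∀ q, μ q = localRes n hn l t q) then 1 else 0)} ∪
     {z | ∃ p : Fin l.sum,
        z = RingQuot.mkAlgHom k (Rel k Q (Set.univ : Set (Fin l.sum → Fin n))) (Xg k p)} ∪
     {z | ∃ (j : ℕ) (h : j + 1 < l.sum), sameBlock l j ∧
        z = RingQuot.mkAlgHom k (Rel k Q (Set.univ : Set (Fin l.sum → Fin n))) (Tg k j h)})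

/-- The convolution product `Sp((λ_ℓ)) ∘ ⋯ ∘ Sp((λ₂)) ∘ Sp((λ₁))` as a cyclic left
module over the quiver Hecke algebra. -/
noncomputable def ConvMod : Type :=
  RingQuot (Rel k Q (Set.univ : Set (Fin l.sum → Fin n))) ⧸ convIdeal k n hn Q l

noncomputable instance : AddCommGroup (ConvMod k n hn Q l) :=
  inferInstanceAs (AddCommGroup
    (RingQuot (Rel k Q (Set.univ : Set (Fin l.sum → Fin n))) ⧸ convIdeal k n hn Q l))

noncomputable instance : Module (RingQuot (Rel k Q (Set.univ : Set (Fin l.sum → Fin n))))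
    (ConvMod k n hn Q l) :=
  inferInstanceAs (Module _
    (RingQuot (Rel k Q (Set.univ : Set (Fin l.sum → Fin n))) ⧸ convIdeal k n hn Q l))

/-- The radical of the convolution product: the intersection of its maximal
submodules. -/
noncomputable def convRad :
    Submodule (RingQuot (Rel k Q (Set.univ : Set (Fin l.sum → Fin n))))
      (ConvMod k n hn Q l) :=
  sInf {U | IsCoatom U}

/-- The head (largest semisimple quotient) of the convolution product. -/
noncomputable def ConvHead : Type := ConvMod k n hn Q l ⧸ convRad k n hn Q l

noncomputable instance : AddCommGroup (ConvHead k n hn Q l) :=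
  inferInstanceAs (AddCommGroup (ConvMod k n hn Q l ⧸ convRad k n hn Q l))

noncomputable instance : Module (RingQuot (Rel k Q (Set.univ : Set (Fin l.sum → Fin n))))
    (ConvHead k n hn Q l) :=
  inferInstanceAs (Module _ (ConvMod k n hn Q l ⧸ convRad k n hn Q l))

end Conv

/-! ### Abstract filtered nil-Coxeter argument -/

section Abstract

variable {k : Type} [Field k] {M : Type} [AddCommGroup M] [Module k M]

/-- `WW m T v r f u`: `u` is a monomial of length `r` in the operators `T j` applied to `v`,
and `f` records which strand occupies which position. -/
inductive WW (m : ℕ) (T : ℕ → M →ₗ[k] M) (v : M) : ℕ → Equiv.Perm ℕ → M → Prop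
  | nil : WW m T v 0 1 v
  | cons (r : ℕ) (f : Equiv.Perm ℕ) (u : M) (j : ℕ) (h : j + 1 < m) :
      WW m T v r f u → WW m T v (r + 1) (f * Equiv.swap j (j + 1)) (T j u)

/-- Span of monomials of length at most `r`. -/
def FF (m : ℕ) (T : ℕ → M →ₗ[k] M) (v : M) (r : ℕ) : Submodule k M :=
  Submodule.span k {u | ∃ r' f, r' ≤ r ∧ WW m T v r' f u}

variable {m : ℕ} {T : ℕ → M →ₗ[k] M} {v : M}

theorem FF_mono {r s : ℕ} (h : r ≤ s) : FF m T v r ≤ FF m T v s := by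
  apply Submodule.span_mono
  rintro u ⟨r', f, h', hw⟩
  exact ⟨r', f, h'.trans h, hw⟩

theorem WW.mem {r : ℕ} {f : Equiv.Perm ℕ} {u : M} (h : WW m T v r f u) : u ∈ FF m T v r :=
  Submodule.subset_span ⟨r, f, le_rfl, h⟩

theorem FF_T {r j : ℕ} (h : j + 1 < m) {u : M} (hu : u ∈ FF m T v r) :
    T j u ∈ FF m T v (r + 1) := by
  induction hu using Submodule.span_induction with
  | mem u hu =>
    obtain ⟨r', f, h', hw⟩ := hu
    exact Submodule.subset_span ⟨r' + 1, _, by omega, WW.cons r' f u j h hw⟩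
  | zero => simp
  | add a b _ _ ha hb => rw [map_add]; exact add_mem ha hb
  | smul c a _ ha => rw [map_smul]; exact Submodule.smul_mem _ c ha

/-- The relations, modulo lower terms. -/
structure NilRel (m : ℕ) (T : ℕ → M →ₗ[k] M) (v : M) : Prop where
  comm : ∀ i j, i + 1 < m → j + 1 < m → (i + 1 < j ∨ j + 1 < i) → ∀ u, T i (T j u) = T j (T i u)
  sq : ∀ j, j + 1 < m → ∀ r, ∀ u ∈ FF m T v r, T j (T j u) ∈ FF m T v r
  braid : ∀ j, j + 2 < m → ∀ r, ∀ u ∈ FF m T v r,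
    T (j + 1) (T j (T (j + 1) u)) - T j (T (j + 1) (T j u)) ∈ FF m T v r

theorem sw_comm {i j : ℕ} (h : i + 1 < j ∨ j + 1 < i) :
    Equiv.swap i (i + 1) * Equiv.swap j (j + 1) = Equiv.swap j (j + 1) * Equiv.swap i (i + 1) := by
  ext x
  simp only [Equiv.Perm.mul_apply, Equiv.swap_apply_def]
  split_ifs <;> omega

theorem sw_braid (j : ℕ) :
    Equiv.swap (j + 1) (j + 2) * Equiv.swap j (j + 1) * Equiv.swap (j + 1) (j + 2) =
      Equiv.swap j (j + 1) * Equiv.swap (j + 1) (j + 2) * Equiv.swap j (j + 1) := by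
  ext x
  simp only [Equiv.Perm.mul_apply, Equiv.swap_apply_def]
  split_ifs <;> omega

/-- Conclusion of the exchange lemma. -/
def Exch (m : ℕ) (T : ℕ → M →ₗ[k] M) (v : M) (r : ℕ) (f : Equiv.Perm ℕ) (u : M) (j : ℕ) : Prop :=
  ∃ r', r = r' + 1 ∧ (u ∈ FF m T v r' ∨
    ∃ u', WW m T v r' (f * Equiv.swap j (j + 1)) u' ∧ u - T j u' ∈ FF m T v r')

theorem Exch.kill (H : NilRel m T v) {r : ℕ} {f : Equiv.Perm ℕ} {u : M} {j : ℕ}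
    (hj : j + 1 < m) (h : Exch m T v r f u j) : T j u ∈ FF m T v r := by
  obtain ⟨r', rfl, h | ⟨u', hw, hu⟩⟩ := h
  · exact FF_T hj h
  · have h1 := FF_T hj hu
    have h2 := FF_mono (Nat.le_succ r') (H.sq j hj r' u' hw.mem)
    rw [map_sub] at h1
    simpa using add_mem h1 h2

theorem exch (H : NilRel m T v) : ∀ (r : ℕ) (f : Equiv.Perm ℕ) (u : M), WW m T v r f u →
    ∀ j, j + 1 < m → f (j + 1) < f j → Exch m T v r f u j := by
  intro r
  induction r using Nat.strong_induction_on with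
  | _ r IH =>
  intro f u hw j hj hd
  cases hw with
  | nil => simp at hd
  | cons r f u i hi hw =>
    refine ⟨r, rfl, ?_⟩
    by_cases hdi : f (i + 1) < f i
    · exact Or.inl ((IH r (by omega) f u hw i hi hdi).kill H hi)
    rcases lt_trichotomy i j with hij | rfl | hij
    · by_cases hij' : i + 1 = j
      · -- i = j - 1
        subst hij'
        have e1 : Equiv.swap i (i + 1) (i + 2) = i + 2 :=
          Equiv.swap_apply_of_ne_of_ne (by omega) (by omega)
        simp only [Equiv.Perm.mul_apply, Equiv.swap_apply_right, e1] at hd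
        have hne : f (i + 1) ≠ f i := fun h => by have := f.injective h; omega
        obtain ⟨r1, rfl, h | ⟨u1, hw1, hu1⟩⟩ := IH r (by omega) f u hw (i + 1) hj
          (by show f (i + 2) < _; omega)
        · exact Or.inl (FF_T hi h)
        have e2 : Equiv.swap (i + 1) (i + 2) i = i :=
          Equiv.swap_apply_of_ne_of_ne (by omega) (by omega)
        obtain ⟨r2, rfl, h | ⟨u2, hw2, hu2⟩⟩ := IH r1 (by omega) _ u1 hw1 i hi
          (by simp only [Equiv.Perm.mul_apply, Equiv.swap_apply_left, e2]; exact hd)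
        · left
          have a1 := FF_T hi hu1
          have a2 := FF_T hi (FF_T hj h)
          rw [map_sub] at a1
          simpa using add_mem a1 a2
        · right
          refine ⟨T i (T (i + 1) u2), ?_, ?_⟩
          · have := WW.cons _ _ _ i hi (WW.cons _ _ _ (i + 1) hj hw2)
            convert this using 1
            have hb := sw_braid i
            simp only [mul_assoc] at hb ⊢
            rw [← hb]; simp
          · have a1 := FF_T hi hu1
            have a2 := FF_T hi (FF_T hj hu2)
            have a3 := FF_mono (show r2 ≤ r2 + 1 + 1 by omega) (H.braid i hj r2 u2 hw2.mem)
            simp only [map_sub] at a1 a2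
            have := sub_mem (add_mem a1 a2) a3
            convert this using 1
            abel
      · -- commuting
        have e1 : Equiv.swap i (i + 1) j = j :=
          Equiv.swap_apply_of_ne_of_ne (by omega) (by omega)
        have e2 : Equiv.swap i (i + 1) (j + 1) = j + 1 :=
          Equiv.swap_apply_of_ne_of_ne (by omega) (by omega)
        simp only [Equiv.Perm.mul_apply, e1, e2] at hd
        obtain ⟨r1, rfl, h | ⟨u1, hw1, hu1⟩⟩ := IH r (by omega) f u hw j hj hd
        · exact Or.inl (FF_T hi h)
        right
        refine ⟨T i u1, ?_, ?_⟩
        · have := WW.cons _ _ _ i hi hw1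
          rw [mul_assoc, ← sw_comm (i := i) (j := j) (by omega), ← mul_assoc] at this
          exact this
        · rw [H.comm j i hj hi (by omega), ← map_sub]
          exact FF_T hi hu1
    · right
      refine ⟨u, ?_, by simp⟩
      simpa [mul_assoc] using hw
    · by_cases hij' : j + 1 = i
      · subst hij'
        have e1 : Equiv.swap (j + 1) (j + 2) j = j :=
          Equiv.swap_apply_of_ne_of_ne (by omega) (by omega)
        simp only [Equiv.Perm.mul_apply, Equiv.swap_apply_left, e1] at hd
        have hne : f (j + 1 + 1) ≠ f (j + 1) := fun h => by have := f.injective h; omega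
        obtain ⟨r1, rfl, h | ⟨u1, hw1, hu1⟩⟩ := IH r (by omega) f u hw j hj
          (by omega)
        · exact Or.inl (FF_T hi h)
        have e2 : Equiv.swap j (j + 1) (j + 2) = j + 2 :=
          Equiv.swap_apply_of_ne_of_ne (by omega) (by omega)
        obtain ⟨r2, rfl, h | ⟨u2, hw2, hu2⟩⟩ := IH r1 (by omega) _ u1 hw1 (j + 1) hi
          (by simp only [Equiv.Perm.mul_apply, Equiv.swap_apply_right, e2]; exact hd)
        · left
          have a1 := FF_T hi hu1
          have a2 := FF_T hi (FF_T hj h)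
          rw [map_sub] at a1
          simpa using add_mem a1 a2
        · right
          refine ⟨T (j + 1) (T j u2), ?_, ?_⟩
          · have := WW.cons _ _ _ (j + 1) hi (WW.cons _ _ _ j hj hw2)
            convert this using 1
            have hb := sw_braid j
            simp only [mul_assoc] at hb ⊢
            rw [hb]; simp
          · have a1 := FF_T hi hu1
            have a2 := FF_T hi (FF_T hj hu2)
            have a3 := FF_mono (show r2 ≤ r2 + 1 + 1 by omega) (H.braid j hi r2 u2 hw2.mem)
            simp only [map_sub] at a1 a2
            have := add_mem (add_mem a1 a2) a3
            convert this using 1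
            abel
      · have e1 : Equiv.swap i (i + 1) j = j :=
          Equiv.swap_apply_of_ne_of_ne (by omega) (by omega)
        have e2 : Equiv.swap i (i + 1) (j + 1) = j + 1 :=
          Equiv.swap_apply_of_ne_of_ne (by omega) (by omega)
        simp only [Equiv.Perm.mul_apply, e1, e2] at hd
        obtain ⟨r1, rfl, h | ⟨u1, hw1, hu1⟩⟩ := IH r (by omega) f u hw j hj hd
        · exact Or.inl (FF_T hi h)
        right
        refine ⟨T i u1, ?_, ?_⟩
        · have := WW.cons _ _ _ i hi hw1
          rw [mul_assoc, ← sw_comm (i := i) (j := j) (by omega), ← mul_assoc] at this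
          exact this
        · rw [H.comm j i hj hi (by omega), ← map_sub]
          exact FF_T hi hu1

/-- Adjacent strands `a, a+1` with `T a v = 0` at positions `j, j+1`: `T j` kills, modulo lower. -/
theorem para (H : NilRel m T v) (a : ℕ) (ha : T a v = 0) : ∀ (r : ℕ) (f : Equiv.Perm ℕ) (u : M),
    WW m T v r f u → ∀ j, j + 1 < m → f j = a → f (j + 1) = a + 1 → T j u ∈ FF m T v r := by
  intro r
  induction r using Nat.strong_induction_on with
  | _ r IH =>
  intro f u hw j hj h0 h1
  cases hw with
  | nil => simp at h0; subst h0; rw [ha]; exact zero_mem _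
  | cons r f u i hi hw =>
    by_cases hdi : f (i + 1) < f i
    · exact FF_T hj ((exch H r f u hw i hi hdi).kill H hi)
    rcases lt_trichotomy i j with hij | rfl | hij
    · by_cases hij' : i + 1 = j
      · subst hij'
        have e1 : Equiv.swap i (i + 1) (i + 2) = i + 2 :=
          Equiv.swap_apply_of_ne_of_ne (by omega) (by omega)
        simp only [Equiv.Perm.mul_apply, Equiv.swap_apply_right, e1] at h0 h1
        have hne : f (i + 1) ≠ f i := fun h => by have := f.injective h; omega
        have hne2 : f (i + 1) ≠ f (i + 2) := fun h => by have := f.injective h; omega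
        have e2 : Equiv.swap (i + 1) (i + 2) i = i :=
          Equiv.swap_apply_of_ne_of_ne (by omega) (by omega)
        obtain ⟨r1, rfl, h | ⟨u1, hw1, hu1⟩⟩ := exch H r f u hw (i + 1) hj
          (by show f (i + 2) < _; omega)
        · exact FF_T hj (FF_T hi h)
        have hk := IH r1 (by omega) _ u1 hw1 i hi
          (by simp only [Equiv.Perm.mul_apply, e2]; exact h0)
          (by simp only [Equiv.Perm.mul_apply, Equiv.swap_apply_left]; exact h1)
        have a1 := FF_T hj (FF_T hi hu1)
        have a2 := FF_T hi (FF_T hj hk)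
        have a3 := FF_mono (show r1 ≤ r1 + 1 + 1 by omega) (H.braid i hj r1 u1 hw1.mem)
        simp only [map_sub] at a1
        have := add_mem (add_mem a1 a2) a3
        convert this using 1
        abel
      · have e1 : Equiv.swap i (i + 1) j = j :=
          Equiv.swap_apply_of_ne_of_ne (by omega) (by omega)
        have e2 : Equiv.swap i (i + 1) (j + 1) = j + 1 :=
          Equiv.swap_apply_of_ne_of_ne (by omega) (by omega)
        simp only [Equiv.Perm.mul_apply, e1, e2] at h0 h1
        rw [H.comm j i hj hi (by omega)]
        exact FF_T hi (IH r (by omega) f u hw j hj h0 h1)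
    · exact FF_mono (by omega) (H.sq i hi r u hw.mem)
    · by_cases hij' : j + 1 = i
      · subst hij'
        have e1 : Equiv.swap (j + 1) (j + 2) j = j :=
          Equiv.swap_apply_of_ne_of_ne (by omega) (by omega)
        simp only [Equiv.Perm.mul_apply, Equiv.swap_apply_left, e1] at h0 h1
        have hne : f (j + 1 + 1) ≠ f (j + 1) := fun h => by have := f.injective h; omega
        have hne2 : f (j + 1) ≠ f j := fun h => by have := f.injective h; omega
        have e2 : Equiv.swap j (j + 1) (j + 2) = j + 2 :=
          Equiv.swap_apply_of_ne_of_ne (by omega) (by omega)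
        obtain ⟨r1, rfl, h | ⟨u1, hw1, hu1⟩⟩ := exch H r f u hw j hj
          (by omega)
        · exact FF_T hj (FF_T hi h)
        have hk := IH r1 (by omega) _ u1 hw1 (j + 1) hi
          (by simp only [Equiv.Perm.mul_apply, Equiv.swap_apply_right]; exact h0)
          (by simp only [Equiv.Perm.mul_apply, e2]; exact h1)
        have a1 := FF_T hj (FF_T hi hu1)
        have a2 := FF_T hi (FF_T hj hk)
        have a3 := FF_mono (show r1 ≤ r1 + 1 + 1 by omega) (H.braid j hi r1 u1 hw1.mem)
        simp only [map_sub] at a1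
        have := sub_mem (add_mem a1 a2) a3
        convert this using 1
        abel
      · have e1 : Equiv.swap i (i + 1) j = j :=
          Equiv.swap_apply_of_ne_of_ne (by omega) (by omega)
        have e2 : Equiv.swap i (i + 1) (j + 1) = j + 1 :=
          Equiv.swap_apply_of_ne_of_ne (by omega) (by omega)
        simp only [Equiv.Perm.mul_apply, e1, e2] at h0 h1
        rw [H.comm j i hj hi (by omega)]
        exact FF_T hi (IH r (by omega) f u hw j hj h0 h1)

/-- Every monomial is lower, or its permutation is a shuffle. -/
theorem shuffle (H : NilRel m T v) (r : ℕ) (f : Equiv.Perm ℕ) (u : M) (hw : WW m T v r f u) :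
    (∃ r', r = r' + 1 ∧ u ∈ FF m T v r') ∨ ∀ a, T a v = 0 → f.symm a < f.symm (a + 1) := by
  induction hw with
  | nil => right; intro a _; exact Nat.lt_succ_self a
  | cons r f u j hj hw ih =>
    rcases ih with ⟨r', rfl, h⟩ | h
    · exact Or.inl ⟨r' + 1, rfl, FF_T hj h⟩
    by_cases hb : ∃ a, T a v = 0 ∧ f j = a ∧ f (j + 1) = a + 1
    · obtain ⟨a, ha, h0, h1⟩ := hb
      exact Or.inl ⟨r, rfl, para H a ha r f u hw j hj h0 h1⟩
    right
    intro a ha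
    have hlt := h a ha
    have : ¬ (f.symm a = j ∧ f.symm (a + 1) = j + 1) := by
      rintro ⟨q0, q1⟩
      exact hb ⟨a, ha, by rw [← q0]; simp, by rw [← q1]; simp⟩
    have hs : ∀ x, (f * Equiv.swap j (j + 1)).symm x = Equiv.swap j (j + 1) (f.symm x) := by
      intro x
      rw [Equiv.symm_apply_eq]; simp
    rw [hs, hs]
    generalize f.symm a = x at *
    generalize f.symm (a + 1) = y at *
    simp only [Equiv.swap_apply_def]
    split_ifs <;> omega

theorem one_lower (H : NilRel m T v) (r : ℕ) (u : M) (hw : WW m T v (r + 1) 1 u) :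
    u ∈ FF m T v r := by
  generalize hf : (1 : Equiv.Perm ℕ) = f' at hw
  cases hw with
  | cons r f u j hj hw =>
    have : f = Equiv.swap j (j + 1) := by
      have := congrArg (· * Equiv.swap j (j + 1)) hf
      simpa [mul_assoc] using this.symm
    subst this
    exact (exch H r _ u hw j hj (by simp)).kill H hj

end Abstract

/-! ### The quiver Hecke algebra side -/

section Alg

variable {k : Type} [Field k] {n m : ℕ} {Q : Fin n → Fin n → MvPolynomial (Fin 2) k}

/-- The quiver Hecke algebra. -/
abbrev RR (k : Type) [Field k] {n : ℕ} (m : ℕ) (Q : Fin n → Fin n → MvPolynomial (Fin 2) k) :=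
  RingQuot (Rel k Q (Set.univ : Set (Fin m → Fin n)))

/-- The quotient map. -/
noncomputable abbrev pr (Q : Fin n → Fin n → MvPolynomial (Fin 2) k) :
    FA k n m →ₐ[k] RR k m Q := RingQuot.mkAlgHom k (Rel k Q (Set.univ : Set (Fin m → Fin n)))

theorem pr_rel {a b : FA k n m} (h : Rel k Q (Set.univ : Set (Fin m → Fin n)) a b) :
    pr Q a = pr Q b := RingQuot.mkAlgHom_rel k h

theorem pr_ee (ν ν' : Fin m → Fin n) :
    pr Q (Eg k ν) * pr Q (Eg k ν') = if ν = ν' then pr Q (Eg k ν) else 0 := by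
  split_ifs with h
  · subst h; simpa using pr_rel (Rel.e_idem (S := Set.univ) (Q := Q) (k := k) ν)
  · simpa using pr_rel (Rel.e_orth (S := Set.univ) (Q := Q) (k := k) ν ν' h)

theorem pr_esum : ∑ ν : Fin m → Fin n, pr Q (Eg k ν) = 1 := by
  simpa using pr_rel (Rel.e_sum (S := Set.univ) (Q := Q) (k := k))

theorem pr_te (j : ℕ) (h : j + 1 < m) (ν : Fin m → Fin n) :
    pr Q (Tg k j h) * pr Q (Eg k ν) = pr Q (Eg k (swapSeq j h ν)) * pr Q (Tg k j h) := by
  simpa using pr_rel (Rel.te (S := Set.univ) (Q := Q) (k := k) j h ν)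

theorem swapSeq_swapSeq (j : ℕ) (h : j + 1 < m) (ν : Fin m → Fin n) :
    swapSeq j h (swapSeq j h ν) = ν := by
  funext p; simp [swapSeq, posSwap]

theorem pr_xt (j : ℕ) (h : j + 1 < m) (ν : Fin m → Fin n) (p : Fin m) :
    ∃ c : k, pr Q (Xg k p) * pr Q (Tg k j h) * pr Q (Eg k ν) =
      pr Q (Tg k j h) * pr Q (Xg k (posSwap j h p)) * pr Q (Eg k ν) + c • pr Q (Eg k ν) := by
  have key := fun q hc => pr_rel (Rel.tx_comm (S := Set.univ) (Q := Q) (k := k) j h ν q hc)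
  have hinv : posSwap j h (posSwap j h p) = p := by simp [posSwap]
  by_cases hv : ν ⟨j, Nat.lt_of_succ_lt h⟩ = ν ⟨j + 1, h⟩
  · by_cases h1 : p = ⟨j, Nat.lt_of_succ_lt h⟩
    · have := pr_rel (Rel.tx_right (S := Set.univ) (Q := Q) (k := k) j h ν hv)
      refine ⟨-1, ?_⟩
      subst h1
      simp only [map_mul, map_add] at this
      simp only [posSwap, Equiv.swap_apply_left, this]
      have h0 : pr Q (Eg k ν) + (-1 : k) • pr Q (Eg k ν) = 0 := by
        conv_lhs => lhs; rw [← one_smul k (pr Q (Eg k ν))]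
        rw [← add_smul, add_neg_cancel, zero_smul]
      rw [add_assoc, h0, add_zero]
    · by_cases h2 : p = ⟨j + 1, h⟩
      · have := pr_rel (Rel.tx_left (S := Set.univ) (Q := Q) (k := k) j h ν hv)
        refine ⟨1, ?_⟩
        subst h2
        simp only [map_mul, map_sub] at this
        simp [posSwap, this]
      · have h3 : posSwap j h p = p := Equiv.swap_apply_of_ne_of_ne h1 h2
        have := key p (Or.inr ⟨fun h => h1 (Fin.ext h), fun h => h2 (Fin.ext h)⟩)
        refine ⟨0, ?_⟩
        simp only [map_mul, h3] at this ⊢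
        simp [this]
  · have := key (posSwap j h p) (Or.inl hv)
    refine ⟨0, ?_⟩
    simp only [map_mul, hinv] at this
    simp [this]

variable {M : Type} [AddCommGroup M] [Module k M] [Module (RR k m Q) M]
  [IsScalarTower k (RR k m Q) M]

/-- The operators `τ_j` as a total family. -/
noncomputable def TT (Q : Fin n → Fin n → MvPolynomial (Fin 2) k) (M : Type) [AddCommGroup M]
    [Module k M] [Module (RR k m Q) M] [IsScalarTower k (RR k m Q) M] (j : ℕ) : M →ₗ[k] M :=
  if h : j + 1 < m then Algebra.lsmul k k M (pr Q (Tg k j h)) else 0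

theorem TT_apply (j : ℕ) (h : j + 1 < m) (u : M) :
    TT (m := m) Q M j u = pr Q (Tg k j h) • u := by
  simp [TT, h]

/-- Restriction of an infinite sequence. -/
def rs (m : ℕ) (ν : ℕ → Fin n) : Fin m → Fin n := fun p => ν p

theorem rs_swap (ν : ℕ → Fin n) (j : ℕ) (h : j + 1 < m) :
    swapSeq j h (rs m ν) = rs m (ν ∘ Equiv.swap j (j + 1)) := by
  funext p
  simp only [swapSeq, rs, posSwap, Function.comp, Equiv.swap_apply_def, Fin.ext_iff]
  split_ifs <;> rfl

/-- The stabilizer of a `k`-subspace. -/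
noncomputable def stab (m : ℕ) (Q : Fin n → Fin n → MvPolynomial (Fin 2) k) {M : Type}
    [AddCommGroup M] [Module k M] [Module (RR k m Q) M] [IsScalarTower k (RR k m Q) M]
    (F : Submodule k M) : Subalgebra k (RR k m Q) where
  carrier := {a | ∀ u ∈ F, a • u ∈ F}
  mul_mem' := by
    intro a b ha hb u hu
    rw [mul_smul]; exact ha _ (hb _ hu)
  add_mem' := by
    intro a b ha hb u hu
    rw [add_smul]; exact add_mem (ha _ hu) (hb _ hu)
  algebraMap_mem' := by
    intro c u hu
    rw [algebraMap_smul]; exact F.smul_mem _ hu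

variable {ν0 : ℕ → Fin n} {v : M}

theorem WW_e (he : pr Q (Eg k (rs m ν0)) • v = v) {r : ℕ} {f : Equiv.Perm ℕ} {u : M}
    (hw : WW m (TT (m := m) Q M) v r f u) : pr Q (Eg k (rs m (ν0 ∘ f))) • u = u := by
  induction hw with
  | nil => simpa using he
  | cons r f u j h hw ih =>
    rw [TT_apply j h]
    conv_rhs => rw [← ih]
    rw [← mul_smul (pr Q (Tg k j h)), pr_te, rs_swap, mul_smul]
    rfl

theorem e_on (ν ν' : Fin m → Fin n) (u : M) (h : pr Q (Eg k ν) • u = u) :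
    pr Q (Eg k ν') • u = if ν' = ν then u else 0 := by
  rw [← h, ← mul_smul, pr_ee]
  split_ifs with h'
  · rw [h']
  · simp

theorem FF_e (he : pr Q (Eg k (rs m ν0)) • v = v) (ν : Fin m → Fin n) (r : ℕ) :
    pr Q (Eg k ν) ∈ stab m Q (FF m (TT (m := m) Q M) v r) := by
  intro u hu
  induction hu using Submodule.span_induction with
  | mem u hu =>
    obtain ⟨r', f, h', hw⟩ := hu
    rw [e_on _ ν u (WW_e he hw)]
    split_ifs
    · exact FF_mono h' hw.mem
    · exact zero_mem _
  | zero => simp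
  | add a b _ _ ha hb => rw [smul_add]; exact add_mem ha hb
  | smul c a _ ha => rw [smul_comm]; exact Submodule.smul_mem _ c ha

theorem FF_x (he : pr Q (Eg k (rs m ν0)) • v = v) (hx : ∀ p : Fin m, pr Q (Xg k p) • v = 0)
    (p : Fin m) (r : ℕ) :
    pr Q (Xg k p) ∈ stab m Q (FF m (TT (m := m) Q M) v r) := by
  have main : ∀ (r : ℕ) (f : Equiv.Perm ℕ) (u : M), WW m (TT (m := m) Q M) v r f u →
      ∀ p : Fin m, pr Q (Xg k p) • u ∈ FF m (TT (m := m) Q M) v r := by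
    intro r f u hw
    induction hw with
    | nil => intro p; rw [hx]; exact zero_mem _
    | cons r f u j h hw ih =>
      intro p
      obtain ⟨c, hc⟩ := pr_xt (Q := Q) j h (rs m (ν0 ∘ f)) p
      have hu := WW_e he hw
      have : pr Q (Xg k p) • TT (m := m) Q M j u =
          TT (m := m) Q M j (pr Q (Xg k (posSwap j h p)) • u) + c • u := by
        rw [TT_apply j h, TT_apply j h]
        have h3 := congrArg (· • u) hc
        simp only [mul_smul, add_smul, hu, smul_assoc] at h3
        exact h3
      rw [this]
      exact add_mem (FF_T h (ih _)) (Submodule.smul_mem _ c (FF_mono (by omega) hw.mem))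
  intro u hu
  induction hu using Submodule.span_induction with
  | mem u hu =>
    obtain ⟨r', f, h', hw⟩ := hu
    exact FF_mono h' (main r' f u hw p)
  | zero => simp
  | add a b _ _ ha hb => rw [smul_add]; exact add_mem ha hb
  | smul c a _ ha => rw [smul_comm]; exact Submodule.smul_mem _ c ha

theorem nilRel (he : pr Q (Eg k (rs m ν0)) • v = v) (hx : ∀ p : Fin m, pr Q (Xg k p) • v = 0) :
    NilRel m (TT (m := m) Q M) v where
  comm := by
    intro i j hi hj hij u
    have := pr_rel (Rel.tt (S := Set.univ) (Q := Q) (k := k) i hi j hj hij)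
    simp only [map_mul] at this
    rw [TT_apply i hi, TT_apply j hj, TT_apply j hj, TT_apply i hi, ← mul_smul, this, mul_smul]
  sq := by
    intro j h r u hu
    rw [TT_apply j h, TT_apply j h, ← mul_smul]
    have : pr Q (Tg k j h) * pr Q (Tg k j h) ∈ stab m Q (FF m (TT (m := m) Q M) v r) := by
      rw [← mul_one (pr Q (Tg k j h) * pr Q (Tg k j h)), ← pr_esum, Finset.mul_sum]
      refine sum_mem fun ν _ => ?_
      have := pr_rel (Rel.tsq (S := Set.univ) (Q := Q) (k := k) j h ν)
      simp only [map_mul] at this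
      rw [this]
      refine mul_mem ?_ (FF_e he ν r)
      simp only [eval2, map_sum, map_mul, map_pow, AlgHom.commutes]
      refine sum_mem fun d _ => mul_mem (Subalgebra.algebraMap_mem _ _) (mul_mem ?_ ?_)
      · exact pow_mem (FF_x he hx _ r) _
      · exact pow_mem (FF_x he hx _ r) _
    exact this u hu
  braid := by
    intro j h2 r u hu
    have h1 : j + 1 < m := by omega
    rw [TT_apply (j + 1) h2, TT_apply j h1, TT_apply (j + 1) h2, TT_apply j h1,
      TT_apply (j + 1) h2, TT_apply j h1]
    simp only [← mul_smul, ← sub_smul]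
    suffices pr Q (Tg k (j + 1) h2) * (pr Q (Tg k j h1) * pr Q (Tg k (j + 1) h2)) -
        pr Q (Tg k j h1) * (pr Q (Tg k (j + 1) h2) * pr Q (Tg k j h1)) ∈
          stab m Q (FF m (TT (m := m) Q M) v r) from this u hu
    rw [← mul_one (_ - _), ← pr_esum, Finset.mul_sum]
    refine sum_mem fun ν _ => ?_
    by_cases hv : ν ⟨j, by omega⟩ = ν ⟨j + 2, h2⟩
    · have := pr_rel (Rel.braid_eq (S := Set.univ) (Q := Q) (k := k) j h1 h2 ν hv)
      simp only [map_mul, map_add] at this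
      rw [sub_mul, ← mul_assoc, this, ← mul_assoc, add_sub_cancel_left]
      refine mul_mem ?_ (FF_e he ν r)
      simp only [eval3, map_sum, map_mul, map_pow, AlgHom.commutes]
      refine sum_mem fun d _ => mul_mem (Subalgebra.algebraMap_mem _ _)
        (mul_mem (mul_mem ?_ ?_) ?_)
      all_goals exact pow_mem (FF_x he hx _ r) _
    · have := pr_rel (Rel.braid_ne (S := Set.univ) (Q := Q) (k := k) j h1 h2 ν hv)
      simp only [map_mul] at this
      rw [sub_mul, ← mul_assoc, this, ← mul_assoc, sub_self]
      exact zero_mem _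

theorem WW_fix {T : ℕ → M →ₗ[k] M} {r : ℕ} {f : Equiv.Perm ℕ} {u : M}
    (hw : WW m T v r f u) : ∀ p, m ≤ p → f p = p := by
  induction hw with
  | nil => simp
  | cons r f u j h hw ih =>
    intro p hp
    rw [Equiv.Perm.mul_apply, Equiv.swap_apply_of_ne_of_ne (by omega) (by omega)]
    exact ih p hp

/-- The only shuffle fixing `ν0` is the identity. -/
theorem shuffle_unique
    (hc2 : ∀ p q, p ≤ q → q + 1 < m → (ν0 q : ℕ) = 0 → (ν0 p : ℕ) < ν0 (q + 1))
    (f : Equiv.Perm ℕ) (hfix : ∀ p, m ≤ p → f p = p)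
    (hs : ∀ a, a + 1 < m → (ν0 a : ℕ) ≠ 0 → f.symm a < f.symm (a + 1))
    (hν : rs m (ν0 ∘ f) = rs m ν0) : f = 1 := by
  have main : ∀ p, f p = p := by
    intro p
    induction p using Nat.strong_induction_on with
    | _ p ih =>
    by_contra hne
    have hpm : p < m := by
      by_contra h; exact hne (hfix p (by omega))
    have hlt : p < f p := by
      by_contra h
      have := f.injective (ih (f p) (by omega))
      exact hne this
    have hfm : f p < m := by
      by_contra h
      exact hne (f.injective (hfix (f p) (by omega)))
    obtain ⟨q, hq⟩ : ∃ q, f p = q + 1 := ⟨f p - 1, by omega⟩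
    have hz : (ν0 q : ℕ) = 0 := by
      by_contra h
      have h1 := hs q (by omega) h
      rw [← hq, Equiv.symm_apply_apply] at h1
      have h2 := ih _ h1
      rw [Equiv.apply_symm_apply] at h2
      omega
    have h3 := hc2 p q (by omega) (by omega) hz
    have h4 := congrFun hν ⟨p, hpm⟩
    simp only [rs, Function.comp] at h4
    rw [hq] at h4
    rw [h4] at h3
    omega
  ext p; simp [main p]

theorem key_module (he : pr Q (Eg k (rs m ν0)) • v = v) (hx : ∀ p : Fin m, pr Q (Xg k p) • v = 0)
    (ht : ∀ (j : ℕ) (h : j + 1 < m), (ν0 j : ℕ) ≠ 0 → pr Q (Tg k j h) • v = 0)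
    (hc2 : ∀ p q, p ≤ q → q + 1 < m → (ν0 q : ℕ) = 0 → (ν0 p : ℕ) < ν0 (q + 1))
    (r : RR k m Q) : ∃ c : k, pr Q (Eg k (rs m ν0)) • r • v = c • v := by
  have H := nilRel (Q := Q) he hx
  have hF : ∀ s, ∀ u ∈ FF m (TT (m := m) Q M) v s,
      ∃ c : k, pr Q (Eg k (rs m ν0)) • u = c • v := by
    intro s
    induction s using Nat.strong_induction_on with
    | _ s ih =>
    intro u hu
    induction hu using Submodule.span_induction with
    | mem u hu =>
      obtain ⟨r', f, h', hw⟩ := hu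
      rcases shuffle H r' f u hw with ⟨r'', rfl, h⟩ | h
      · exact ih r'' (by omega) u h
      · rw [e_on _ _ u (WW_e he hw)]
        split_ifs with hν
        · have hf := shuffle_unique hc2 f (WW_fix hw)
            (fun a ha h0 => h a (by rw [TT_apply a ha]; exact ht a ha h0)) hν.symm
          subst hf
          cases r' with
          | zero =>
            generalize (1 : Equiv.Perm ℕ) = g at hw
            cases hw
            exact ⟨1, by simp⟩
          | succ r' =>
            obtain ⟨c, hc⟩ := ih r' (by omega) u (one_lower H r' u hw)
            rw [e_on _ _ u (WW_e he hw)] at hc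
            exact ⟨c, by simpa using hc⟩
        · exact ⟨0, by simp⟩
    | zero => exact ⟨0, by simp⟩
    | add a b _ _ ha hb =>
      obtain ⟨c, hc⟩ := ha
      obtain ⟨d, hd⟩ := hb
      exact ⟨c + d, by rw [smul_add, hc, hd, add_smul]⟩
    | smul c a _ ha =>
      obtain ⟨d, hd⟩ := ha
      exact ⟨c * d, by rw [smul_comm, hd, mul_smul]⟩
  have hR : ∀ r : RR k m Q, ∀ s, ∀ u ∈ FF m (TT (m := m) Q M) v s,
      ∃ s', r • u ∈ FF m (TT (m := m) Q M) v s' := by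
    intro r
    obtain ⟨a, rfl⟩ := RingQuot.mkAlgHom_surjective k _ r
    induction a using FreeAlgebra.induction with
    | grade0 c =>
      intro s u hu
      refine ⟨s, ?_⟩
      rw [AlgHom.commutes, algebraMap_smul]
      exact Submodule.smul_mem _ _ hu
    | grade1 g =>
      intro s u hu
      cases g with
      | e ν => exact ⟨s, FF_e he ν s u hu⟩
      | x p => exact ⟨s, FF_x he hx p s u hu⟩
      | t j h => exact ⟨s + 1, by have := FF_T h hu; rw [TT_apply j h] at this; exact this⟩
    | mul a b ha hb =>
      intro s u hu
      obtain ⟨s1, h1⟩ := hb s u hu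
      obtain ⟨s2, h2⟩ := ha s1 _ h1
      exact ⟨s2, by rw [map_mul, mul_smul]; exact h2⟩
    | add a b ha hb =>
      intro s u hu
      obtain ⟨s1, h1⟩ := ha s u hu
      obtain ⟨s2, h2⟩ := hb s u hu
      exact ⟨max s1 s2, by
        rw [map_add, add_smul]
        exact add_mem (FF_mono (le_max_left _ _) h1) (FF_mono (le_max_right _ _) h2)⟩
  obtain ⟨s, hs⟩ := hR r 0 v WW.nil.mem
  exact hF s _ hs

end Alg

/-! ### Tableau combinatorics -/

section Tab

theorem exists_rc : ∀ (l : List ℕ) (p : ℕ), p < l.sum →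
    ∃ i c, i < l.length ∧ c < l.getD i 0 ∧ p = (l.take i).sum + c := by
  intro l
  induction l with
  | nil => intro p hp; simp at hp
  | cons x l ih =>
    intro p hp
    by_cases h : p < x
    · exact ⟨0, p, by simp, by simpa using h, by simp⟩
    · obtain ⟨i, c, h1, h2, h3⟩ := ih (p - x) (by simp at hp; omega)
      exact ⟨i + 1, c, by simpa using h1, by simpa using h2, by simp; omega⟩

theorem sum_take_succ' (l : List ℕ) (i : ℕ) (h : i < l.length) :
    (l.take (i + 1)).sum = (l.take i).sum + l.getD i 0 := by
  rw [List.sum_take_succ l i h, List.getD_eq_getElem _ _ h]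

theorem sum_take_mono (l : List ℕ) {i j : ℕ} (h : i ≤ j) : (l.take i).sum ≤ (l.take j).sum := by
  induction l generalizing i j with
  | nil => simp
  | cons x l ih =>
    cases i with
    | zero => simp
    | succ i =>
      cases j with
      | zero => omega
      | succ j => simp; exact ih (by omega)

theorem rc_lt (l : List ℕ) {i c i' c' : ℕ} (h : i < i') (hi : i < l.length)
    (hc : c < l.getD i 0) : (l.take i).sum + c < (l.take i').sum + c' := by
  have := sum_take_mono l (show i + 1 ≤ i' from h)
  rw [sum_take_succ' l i hi] at this
  omega

theorem rc_sum (l : List ℕ) {i c : ℕ} (hi : i < l.length)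
    (hc : c < l.getD i 0) : (l.take i).sum + c < l.sum := by
  have := rc_lt l (c' := 0) hi hi hc
  simpa using this

theorem rc_unique (l : List ℕ) {i c i' c' : ℕ} (hi : i < l.length) (hc : c < l.getD i 0)
    (hi' : i' < l.length) (hc' : c' < l.getD i' 0)
    (h : (l.take i).sum + c = (l.take i').sum + c') : i = i' ∧ c = c' := by
  rcases lt_trichotomy i i' with h1 | rfl | h1
  · have := rc_lt l (c' := c') h1 hi hc; omega
  · exact ⟨rfl, by omega⟩
  · have := rc_lt l (c' := c) h1 hi' hc'; omega

/-- Row coordinate. -/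
noncomputable def rI (l : List ℕ) (p : ℕ) (h : p < l.sum) : ℕ := (exists_rc l p h).choose

/-- Column offset. -/
noncomputable def rC (l : List ℕ) (p : ℕ) (h : p < l.sum) : ℕ :=
  (exists_rc l p h).choose_spec.choose

theorem rIC (l : List ℕ) (p : ℕ) (h : p < l.sum) :
    rI l p h < l.length ∧ rC l p h < l.getD (rI l p h) 0 ∧
      p = (l.take (rI l p h)).sum + rC l p h :=
  (exists_rc l p h).choose_spec.choose_spec

theorem rIC_eq (l : List ℕ) {i c p : ℕ} (h : p < l.sum) (hi : i < l.length)
    (hc : c < l.getD i 0) (hp : p = (l.take i).sum + c) : rI l p h = i ∧ rC l p h = c := by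
  obtain ⟨h1, h2, h3⟩ := rIC l p h
  exact rc_unique l h1 h2 hi hc (by omega)

/-- The row reading tableau. -/
noncomputable def T0 (l : List ℕ) (p : Fin l.sum) : ℕ × ℕ :=
  (rI l p p.2 + 1, rI l p p.2 + 1 + rC l p p.2)

theorem T0_mono (l : List ℕ) : StrictMono (fun p => toLex (T0 l p)) := by
  intro p q hpq
  obtain ⟨h1, h2, h3⟩ := rIC l p p.2
  obtain ⟨h1', h2', h3'⟩ := rIC l q q.2
  have hpq' : (p : ℕ) < q := hpq
  show toLex (T0 l p) < toLex (T0 l q)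
  rw [Prod.Lex.toLex_lt_toLex]
  simp only [T0]
  rcases lt_trichotomy (rI l p p.2) (rI l q q.2) with h | h | h
  · left; omega
  · right
    rw [h] at h3 ⊢
    exact ⟨rfl, by omega⟩
  · have := rc_lt l (c' := rC l p p.2) h h1' h2'
    omega

theorem T0_range (l : List ℕ) : Set.range (T0 l) = diagram l := by
  ext ⟨a, b⟩
  simp only [Set.mem_range, diagram, Set.mem_ofPred_eq]
  constructor
  · rintro ⟨p, hp⟩
    obtain ⟨h1, h2, h3⟩ := rIC l p p.2
    simp only [T0, Prod.mk.injEq] at hp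
    obtain ⟨rfl, rfl⟩ := hp
    simp only [Nat.add_sub_cancel]
    refine ⟨h1, ?_, ?_, ?_⟩ <;> omega
  · rintro ⟨h1, h2, h3, h4⟩
    have hc : b - a < l.getD (a - 1) 0 := by omega
    refine ⟨⟨_, rc_sum l h1 hc⟩, ?_⟩
    obtain ⟨e1, e2⟩ := rIC_eq l (rc_sum l h1 hc) h1 hc rfl
    simp only [T0, e1, e2, Prod.mk.injEq]
    omega

theorem isSYT_of_mono (l : List ℕ) (N : ℕ) (g : Fin N → ℕ × ℕ)
    (hg : StrictMono (fun p => toLex (g p))) (hr : Set.range g = diagram l) : IsSYT l N g := by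
  refine ⟨fun a b h => hg.injective (by simp [h]), hr, ?_, ?_⟩
  · intro a b h1 h2
    rw [← hg.lt_iff_lt, Prod.Lex.toLex_lt_toLex]
    exact Or.inr ⟨h1, h2⟩
  · intro a b _ h2
    rw [← hg.lt_iff_lt, Prod.Lex.toLex_lt_toLex]
    exact Or.inl h2

theorem T0_syt (l : List ℕ) : IsSYT l l.sum (T0 l) :=
  isSYT_of_mono l _ _ (T0_mono l) (T0_range l)

theorem swapEnt_eq {N p : ℕ} (h : p + 1 < N) (f : Fin N → ℕ × ℕ) :
    swapEnt (N - 2 - p) (by omega) f = f ∘ Equiv.swap ⟨p, by omega⟩ ⟨p + 1, h⟩ := by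
  unfold swapEnt
  rw [Equiv.swap_comm]
  congr 3 <;> ext <;> simp [Fin.rev] <;> omega

theorem swapEnt_swapEnt {N j : ℕ} (h : j + 1 < N) (f : Fin N → ℕ × ℕ) :
    swapEnt j h (swapEnt j h f) = f := by
  funext p; simp [swapEnt]

theorem syt_swap {l : List ℕ} {N p : ℕ} (h : p + 1 < N) {f : Fin N → ℕ × ℕ} (hf : IsSYT l N f)
    (hd : toLex (f ⟨p + 1, h⟩) < toLex (f ⟨p, by omega⟩)) :
    IsSYT l N (f ∘ Equiv.swap ⟨p, by omega⟩ ⟨p + 1, h⟩) := by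
  obtain ⟨h1, h2, h3, h4⟩ := hf
  rw [Prod.Lex.toLex_lt_toLex] at hd
  have key : ∀ a b : Fin N, Equiv.swap (⟨p, by omega⟩ : Fin N) ⟨p + 1, h⟩ a <
      Equiv.swap (⟨p, by omega⟩ : Fin N) ⟨p + 1, h⟩ b →
      ¬ (Equiv.swap (⟨p, by omega⟩ : Fin N) ⟨p + 1, h⟩ a = ⟨p, by omega⟩ ∧
        Equiv.swap (⟨p, by omega⟩ : Fin N) ⟨p + 1, h⟩ b = ⟨p + 1, h⟩) → a < b := by
    clear hd h1 h2 h3 h4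
    rintro ⟨a, ha⟩ ⟨b, hb⟩
    simp only [Equiv.swap_apply_def, Fin.mk.injEq]
    split_ifs <;>
      simp only [Fin.mk_lt_mk, Fin.mk.injEq, and_self, not_true_eq_false, false_imp_iff,
        imp_true_iff] <;> omega
  refine ⟨h1.comp (Equiv.injective _), ?_, ?_, ?_⟩
  · rw [Set.range_comp, Equiv.range_eq_univ, Set.image_univ, h2]
  · intro a b ha hb
    refine key a b (h3 _ _ ha hb) ?_
    rintro ⟨e1, e2⟩
    simp only [Function.comp, e1, e2] at ha hb
    omega
  · intro a b ha hb
    refine key a b (h4 _ _ ha hb) ?_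
    rintro ⟨e1, e2⟩
    simp only [Function.comp, e1, e2] at ha hb
    omega

theorem mono_of_adj {α : Type*} [Preorder α] {N : ℕ} (f : Fin N → α)
    (h : ∀ p (hp : p + 1 < N), f ⟨p, by omega⟩ < f ⟨p + 1, hp⟩) : StrictMono f := by
  cases N with
  | zero => intro a; exact a.elim0
  | succ N =>
    rw [Fin.strictMono_iff_lt_succ]
    intro i
    exact h i (by omega)

theorem syt_induct {l : List ℕ} {N : ℕ} (g : Fin N → ℕ × ℕ)
    (hg : StrictMono (fun p => toLex (g p))) (hr : Set.range g = diagram l)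
    {Pr : (Fin N → ℕ × ℕ) → Prop} (h0 : Pr g)
    (hstep : ∀ (f : Fin N → ℕ × ℕ) (j : ℕ) (h : j + 1 < N), IsSYT l N f →
      IsSYT l N (swapEnt j h f) → Pr f → Pr (swapEnt j h f)) :
    ∀ f, IsSYT l N f → Pr f := by
  intro f
  have wf : WellFounded (fun a b : Fin N → ℕ × ℕ =>
      toLex (fun p => toLex (a p)) < toLex (fun p => toLex (b p))) :=
    InvImage.wf (fun a : Fin N → ℕ × ℕ => toLex (fun p => toLex (a p)))
      (wellFounded_lt (α := Lex (Fin N → ℕ ×ₗ ℕ)))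
  induction f using wf.induction with
  | _ f ih =>
  intro hf
  by_cases hm : ∀ p (hp : p + 1 < N), toLex (f ⟨p, by omega⟩) < toLex (f ⟨p + 1, hp⟩)
  · have hfm := mono_of_adj (fun p => toLex (f p)) hm
    have : (fun p => toLex (f p)) = fun p => toLex (g p) := by
      rw [← StrictMono.range_inj hfm hg]
      have e1 : (fun p => toLex (f p)) = toLex ∘ f := rfl
      have e2 : (fun p => toLex (g p)) = toLex ∘ g := rfl
      rw [e1, e2, Set.range_comp, Set.range_comp, hr, hf.2.1]
    have hfg : f = g := by
      funext p; exact toLex.injective (congrFun this p)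
    rw [hfg]; exact h0
  · push Not at hm
    obtain ⟨p, hp, hle⟩ := hm
    have hlt : toLex (f ⟨p + 1, hp⟩) < toLex (f ⟨p, by omega⟩) := by
      refine lt_of_le_of_ne hle fun h => ?_
      have := hf.1 (toLex.injective h)
      simp [Fin.ext_iff] at this
    have hs := syt_swap hp hf hlt
    rw [← swapEnt_eq hp] at hs
    have hsm : Pr (swapEnt (N - 2 - p) (by omega) f) := by
      refine ih _ ?_ hs
      refine ⟨⟨p, by omega⟩, ?_, ?_⟩
      · intro q hq
        have hq' : (q : ℕ) < p := hq
        rw [swapEnt_eq hp]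
        show toLex (f _) = toLex (f _)
        rw [Equiv.swap_apply_of_ne_of_ne] <;> simp [Fin.ext_iff] <;> omega
      · rw [swapEnt_eq hp]
        show toLex (f (Equiv.swap _ _ _)) < toLex (f _)
        rw [Equiv.swap_apply_left]; exact hlt
    have := hstep _ (N - 2 - p) (by omega) hs (by rw [swapEnt_swapEnt]; exact hf) hsm
    rwa [swapEnt_swapEnt] at this

theorem getD_lt {l : List ℕ} (hdec : l.Chain' (· > ·)) {i j : ℕ} (h : i < j) (hj : j < l.length) :
    l.getD j 0 < l.getD i 0 := by
  have := List.isChain_iff_pairwise.mp hdec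
  rw [List.pairwise_iff_getElem] at this
  rw [List.getD_eq_getElem _ _ hj, List.getD_eq_getElem _ _ (h.trans hj)]
  exact this i j (h.trans hj) hj h

theorem getD_sub {l : List ℕ} (hdec : l.Chain' (· > ·)) {i j : ℕ} (h : i ≤ j) (hj : j < l.length) :
    l.getD j 0 + j ≤ l.getD i 0 + i := by
  induction j, h using Nat.le_induction with
  | base => exact le_rfl
  | succ j h ih =>
    have := getD_lt hdec (Nat.lt_succ_self j) hj
    have := ih (by omega)
    simp only [Nat.succ_eq_add_one] at *
    omega

theorem syt_le {l : List ℕ} (hdec : l.Chain' (· > ·)) {N : ℕ} {g : Fin N → ℕ × ℕ}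
    (hg : IsSYT l N g) (s p : Fin N) (h1 : (g s).1 ≤ (g p).1) (h2 : (g s).2 ≤ (g p).2) :
    s ≤ p := by
  obtain ⟨i1, i2, i3, i4⟩ := hg
  have ms : g s ∈ diagram l := i2 ▸ Set.mem_range_self s
  have mp : g p ∈ diagram l := i2 ▸ Set.mem_range_self p
  have mt : ((g s).1, (g p).2) ∈ diagram l := by
    simp only [diagram, Set.mem_ofPred_eq] at *
    have := getD_sub hdec (i := (g s).1 - 1) (j := (g p).1 - 1) (by omega) (by omega)
    refine ⟨?_, ?_, ?_, ?_⟩ <;> omega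
  rw [← i2] at mt
  obtain ⟨t, ht⟩ := mt
  have a1 : s ≤ t := by
    rcases h2.lt_or_eq with h | h
    · exact (i3 s t (by simp [ht]) (by simp [ht, h])).le
    · exact (i1 (by rw [ht, ← h])).le
  have a2 : t ≤ p := by
    rcases h1.lt_or_eq with h | h
    · exact (i4 t p (by simp [ht]) (by simp [ht, h])).le
    · exact (i1 (by rw [ht, h])).le
  exact a1.trans a2

theorem res_inj {n : ℕ} (hn : 0 < n) {l : List ℕ} (hdec : l.Chain' (· > ·))
    (hle : ∀ x ∈ l, x ≤ n) {N : ℕ} {f g : Fin N → ℕ × ℕ} (hf : IsSYT l N f) (hg : IsSYT l N g)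
    (h : resSeq n hn f = resSeq n hn g) : f = g := by
  have hres : ∀ p, (f p).2 - (f p).1 = (g p).2 - (g p).1 := by
    intro p
    have := congrFun h p.rev
    simp only [resSeq, Fin.rev_rev, resFin, Fin.mk.injEq] at this
    have b : ∀ b ∈ diagram l, b.2 - b.1 ≤ n - 1 := by
      intro b hb
      simp only [diagram, Set.mem_ofPred_eq] at hb
      have : l.getD (b.1 - 1) 0 ≤ n := by
        rw [List.getD_eq_getElem _ _ hb.1]; exact hle _ (List.getElem_mem _)
      omega
    have b1 := b (f p) (hf.2.1 ▸ Set.mem_range_self p)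
    have b2 := b (g p) (hg.2.1 ▸ Set.mem_range_self p)
    omega
  have half : ∀ (f g : Fin N → ℕ × ℕ), IsSYT l N f → IsSYT l N g →
      (∀ p, (f p).2 - (f p).1 = (g p).2 - (g p).1) → ∀ p, (∀ q, q < p → f q = g q) →
      ¬ (f p).1 < (g p).1 := by
    intro f g hf hg hr p ih hlt
    have mf : f p ∈ diagram l := hf.2.1 ▸ Set.mem_range_self p
    have mg : g p ∈ diagram l := hg.2.1 ▸ Set.mem_range_self p
    have := hr p
    obtain ⟨s, hs⟩ : ∃ s, g s = f p := by
      have := mf; rw [← hg.2.1] at this; exact this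
    simp only [diagram, Set.mem_ofPred_eq] at mf mg
    have hsp := syt_le hdec hg s p (by rw [hs]; omega) (by rw [hs]; omega)
    rcases hsp.lt_or_eq with h' | h'
    · have := ih s h'
      rw [hs] at this
      exact absurd (hf.1 this) h'.ne
    · subst h'
      rw [hs] at hlt; omega
  have main : ∀ p : ℕ, ∀ hp : p < N, f ⟨p, hp⟩ = g ⟨p, hp⟩ := by
    intro p
    induction p using Nat.strong_induction_on with
    | _ p ih =>
    intro hp
    have a1 := half f g hf hg hres ⟨p, hp⟩ (fun q hq => ih q hq q.2)
    have a2 := half g f hg hf (fun p => (hres p).symm) ⟨p, hp⟩ (fun q hq => (ih q hq q.2).symm)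
    have mf : f ⟨p, hp⟩ ∈ diagram l := hf.2.1 ▸ Set.mem_range_self _
    have mg : g ⟨p, hp⟩ ∈ diagram l := hg.2.1 ▸ Set.mem_range_self _
    have := hres ⟨p, hp⟩
    simp only [diagram, Set.mem_ofPred_eq] at mf mg
    ext <;> omega
  funext p
  exact main p p.2

end Tab

section Nu

theorem block_eq (l : List ℕ) (i : ℕ) (hi : i < l.length) :
    blockSize l (l.length - 1 - i) = l.getD i 0 ∧
      blockStart l (l.length - 1 - i) + l.getD i 0 + (l.take i).sum = l.sum := by
  constructor
  · unfold blockSize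
    rw [List.getD_eq_getElem _ _ (by simp; omega), List.getD_eq_getElem _ _ hi,
      List.getElem_reverse]
    congr 1; omega
  · unfold blockStart
    rw [List.take_reverse, List.sum_reverse,
      show l.length - (l.length - 1 - i) = i + 1 by omega]
    have h1 := List.sum_take_add_sum_drop l (i + 1)
    have h2 := sum_take_succ' l i hi
    omega

/-- The residue sequence of the row reading tableau, extended by zero. -/
noncomputable def nu0 (n : ℕ) (hn : 0 < n) (l : List ℕ) (p : ℕ) : Fin n :=
  if h : p < l.sum then resFin n hn (T0 l ⟨l.sum - 1 - p, by omega⟩) else ⟨0, hn⟩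

theorem rs_nu0 (n : ℕ) (hn : 0 < n) (l : List ℕ) :
    rs l.sum (nu0 n hn l) = resSeq n hn (T0 l) := by
  funext p
  have hp := p.2
  simp only [rs, nu0, hp, dif_pos, resSeq]
  congr 2
  ext; simp [Fin.rev]; omega

theorem nu0_val (n : ℕ) (hn : 0 < n) (l : List ℕ) (p i c : ℕ) (hp : p < l.sum)
    (hi : i < l.length) (hc : c < l.getD i 0) (h : l.sum - 1 - p = (l.take i).sum + c) :
    (nu0 n hn l p : ℕ) = min c (n - 1) := by
  obtain ⟨e1, e2⟩ := rIC_eq l (by omega) hi hc h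
  simp only [nu0, hp, dif_pos, resFin, T0, e1, e2]
  congr 1; omega

theorem nu0_block (n : ℕ) (hn : 0 < n) (l : List ℕ) (t : ℕ) (ht : t < l.length)
    (q : Fin (blockSize l t)) :
    blockStart l t + (q : ℕ) < l.sum ∧
      nu0 n hn l (blockStart l t + (q : ℕ)) = localRes n hn l t q := by
  have hq := q.2
  obtain ⟨h1, h2⟩ := block_eq l (l.length - 1 - t) (by omega)
  rw [show l.length - 1 - (l.length - 1 - t) = t by omega] at h1 h2
  have hlt : blockStart l t + (q : ℕ) < l.sum := by omega
  refine ⟨hlt, ?_⟩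
  apply Fin.ext
  rw [nu0_val n hn l _ (l.length - 1 - t) (blockSize l t - 1 - q) hlt (by omega) (by omega)
    (by omega)]
  simp only [localRes, resFin]
  congr 1; omega

theorem block_exists (l : List ℕ) (p : ℕ) (hp : p < l.sum) :
    ∃ t, t < l.length ∧ blockStart l t ≤ p ∧ p < blockStart l t + blockSize l t := by
  obtain ⟨i, c, hi, hc, h⟩ := exists_rc l (l.sum - 1 - p) (by omega)
  obtain ⟨h1, h2⟩ := block_eq l i hi
  exact ⟨l.length - 1 - i, by omega, by omega, by omega⟩

theorem nu0_same (n : ℕ) (hn : 0 < n) (l : List ℕ) (p : ℕ) (hp : p < l.sum)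
    (h0 : (nu0 n hn l p : ℕ) ≠ 0) : sameBlock l p := by
  obtain ⟨i, c, hi, hc, h⟩ := exists_rc l (l.sum - 1 - p) (by omega)
  obtain ⟨h1, h2⟩ := block_eq l i hi
  rw [nu0_val n hn l p i c hp hi hc h] at h0
  exact ⟨l.length - 1 - i, by omega, by omega⟩

theorem nu0_lt (n : ℕ) (hnn : 0 < n) (hn : 2 ≤ n) {l : List ℕ} (hdec : l.Chain' (· > ·))
    (hpos : ∀ x ∈ l, 0 < x) (hle : ∀ x ∈ l, x ≤ n) (p q : ℕ) (hpq : p ≤ q) (hq : q + 1 < l.sum)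
    (h0 : (nu0 n hnn l q : ℕ) = 0) :
    (nu0 n hnn l p : ℕ) < nu0 n hnn l (q + 1) := by
  obtain ⟨i, c, hi, hc, h⟩ := exists_rc l (l.sum - 1 - q) (by omega)
  obtain ⟨i', c', hi', hc', h'⟩ := exists_rc l (l.sum - 1 - p) (by omega)
  rw [nu0_val n hnn l q i c (by omega) hi hc h] at h0
  have hc0 : c = 0 := by omega
  subst hc0
  have hi0 : i ≠ 0 := by
    rintro rfl; simp at h; omega
  obtain ⟨j, rfl⟩ : ∃ j, i = j + 1 := ⟨i - 1, by omega⟩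
  have hj : j < l.length := by omega
  have hst := sum_take_succ' l j hj
  have hmem : ∀ a, a < l.length → 0 < l.getD a 0 ∧ l.getD a 0 ≤ n := by
    intro a ha
    rw [List.getD_eq_getElem _ _ ha]
    exact ⟨hpos _ (List.getElem_mem _), hle _ (List.getElem_mem _)⟩
  have hjj := hmem j hj
  rw [nu0_val n hnn l p i' c' (by omega) hi' hc' h',
    nu0_val n hnn l (q + 1) j (l.getD j 0 - 1) (by omega) hj (by omega) (by omega)]
  have hij : j < i' := by
    by_contra hcon
    have := rc_lt l (c' := 0) (show i' < j + 1 by omega) hi' hc'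
    omega
  have := getD_sub hdec (show j + 1 ≤ i' from hij) hi'
  have := getD_lt hdec hij hi'
  have : l.getD i' 0 ≤ l.getD (j + 1) 0 := by omega
  have := getD_lt hdec (Nat.lt_succ_self j) hi
  simp only [Nat.succ_eq_add_one] at *
  omega

end Nu

section Final

variable {k : Type} [Field k] {n : ℕ} {hn : 0 < n}
  {Q : Fin n → Fin n → MvPolynomial (Fin 2) k} {l : List ℕ}

/-- The idempotents other than the distinguished one lie in the ideal. -/
theorem e_mem_convIdeal (ν : Fin l.sum → Fin n) (hν : ν ≠ rs l.sum (nu0 n hn l)) :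
    pr Q (Eg k ν) ∈ convIdeal k n hn Q l := by
  obtain ⟨p, hp⟩ := Function.ne_iff.mp hν
  obtain ⟨t, ht, h1, h2⟩ := block_exists l p p.2
  have hb := nu0_block n hn l t ht
  let μ : Fin (blockSize l t) → Fin n := fun q => ν ⟨blockStart l t + (q : ℕ), (hb q).1⟩
  have hμ : ¬ ∀ q, μ q = localRes n hn l t q := by
    intro h
    have h3 := h ⟨p - blockStart l t, by omega⟩
    rw [← (hb _).2] at h3
    apply hp
    simp only [μ, rs, show blockStart l t + (p - blockStart l t) = p by omega] at h3 ⊢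
    exact h3
  have hmem : imgE k n Q l t μ ∈ convIdeal k n hn Q l := by
    have : imgE k n Q l t μ - (if (∀ q, μ q = localRes n hn l t q) then 1 else 0) ∈
        convIdeal k n hn Q l :=
      Submodule.subset_span (Or.inl (Or.inl ⟨t, ht, μ, rfl⟩))
    rwa [if_neg hμ, sub_zero] at this
  have := Submodule.smul_mem _ (pr Q (Eg k ν)) hmem
  convert this using 1
  rw [smul_eq_mul, imgE, map_sum, Finset.mul_sum, Finset.sum_eq_single ν]
  · have := pr_ee (Q := Q) (k := k) ν ν
    rw [if_pos rfl] at this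
    exact this.symm
  · intro b _ hb'
    have := pr_ee (Q := Q) (k := k) ν b
    rw [if_neg (Ne.symm hb')] at this
    exact this
  · intro hcon
    exfalso; apply hcon
    simp only [Finset.mem_filter, Finset.mem_univ, true_and]
    intro q hq
    rfl

end Final

theorem key_conv {k : Type} [Field k] (n : ℕ) (hn : 0 < n) (hn2 : 2 ≤ n) (Q : Fin n → Fin n → MvPolynomial (Fin 2) k) (l : List ℕ)
    (hdec : l.Chain' (· > ·))
    (hpos : ∀ x ∈ l, 0 < x) (hle : ∀ x ∈ l, x ≤ n) (r : RR k l.sum Q) :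
    ∃ c : k, pr Q (Eg k (rs l.sum (nu0 n hn l))) * r - algebraMap k _ c ∈
      convIdeal k n hn Q l := by
  let I := convIdeal k n hn Q l
  let v : RR k l.sum Q ⧸ I := Submodule.Quotient.mk 1
  have hz : ∀ a : RR k l.sum Q, a ∈ I → a • v = 0 := by
    intro a ha
    show Submodule.Quotient.mk (a • (1 : RR k l.sum Q)) = 0
    rw [Submodule.Quotient.mk_eq_zero, smul_eq_mul, mul_one]; exact ha
  have he : pr Q (Eg k (rs l.sum (nu0 n hn l))) • v = v := by
    conv_rhs => rw [← one_smul (RR k l.sum Q) v, ← pr_esum, Finset.sum_smul]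
    rw [Finset.sum_eq_single (rs l.sum (nu0 n hn l))]
    · intro b _ hb
      exact hz _ (e_mem_convIdeal b hb)
    · simp
  obtain ⟨c, hc⟩ := key_module (Q := Q) (ν0 := nu0 n hn l) (v := v) he
    (fun p => hz _ (Submodule.subset_span (Or.inl (Or.inr ⟨p, rfl⟩))))
    (fun j h h0 => hz _ (Submodule.subset_span
      (Or.inr ⟨j, h, nu0_same n hn l j (by omega) h0, rfl⟩)))
    (fun p q => nu0_lt n hn hn2 hdec hpos hle p q) r
  refine ⟨c, ?_⟩
  rw [← Submodule.Quotient.eq]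
  rw [← mul_smul, ← algebraMap_smul (RR k l.sum Q) c v] at hc
  have h1 : ∀ a : RR k l.sum Q, a • v = Submodule.Quotient.mk a := by
    intro a
    show Submodule.Quotient.mk (a • (1 : RR k l.sum Q)) = _
    rw [smul_eq_mul, mul_one]
  rw [h1, h1] at hc
  exact hc


section Head

/-- The head of a cyclic module, abstractly. -/
theorem head_abstract {k R V : Type} [Field k] [Ring R] [Algebra k R] [AddCommGroup V]
    [Module k V] (I : Submodule R R) (ρ : R →ₐ[k] Module.End k V) (d : V) (hd : d ≠ 0) (e : R)
    (hI : ∀ a ∈ I, ρ a d = 0) (hsurj : ∀ w, ∃ r, ρ r d = w)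
    (hkey : ∀ r, ∃ c : k, e * r - algebraMap k R c ∈ I)
    (hback : ∀ w, w ≠ 0 → ∃ (r : R) (c : k), c ≠ 0 ∧ ρ (e * r) w = c • d) :
    ∃ φ : ((R ⧸ I) ⧸ (sInf {U : Submodule R (R ⧸ I) | IsCoatom U})) ≃+ V,
      ∀ r z, φ (r • z) = ρ r (φ z) := by
  letI : Module R V := Module.compHom V (ρ : R →+* Module.End k V)
  have hact : ∀ (r : R) (w : V), r • w = ρ r w := fun _ _ => rfl
  let Φ0 : R →ₗ[R] V := LinearMap.toSpanSingleton R V d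
  have hΦ0 : ∀ r, Φ0 r = ρ r d := fun _ => rfl
  let Φ : (R ⧸ I) →ₗ[R] V := I.liftQ Φ0 (by
    intro a ha
    rw [LinearMap.mem_ker, hΦ0]
    exact hI a ha)
  have hΦ : ∀ a : R, Φ (Submodule.Quotient.mk a) = ρ a d := fun _ => rfl
  have hs : Function.Surjective Φ := by
    intro w
    obtain ⟨r, hr⟩ := hsurj w
    exact ⟨Submodule.Quotient.mk r, hr⟩
  have hne : LinearMap.ker Φ ≠ ⊤ := by
    intro h
    have : (Submodule.Quotient.mk 1 : R ⧸ I) ∈ LinearMap.ker Φ := by rw [h]; trivial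
    rw [LinearMap.mem_ker, hΦ, map_one] at this
    exact hd this
  have hmk : ∀ r a : R, r • (Submodule.Quotient.mk a : R ⧸ I) = Submodule.Quotient.mk (r * a) :=
    fun _ _ => rfl
  have hmax : ∀ U : Submodule R (R ⧸ I), U ≠ ⊤ → U ≤ LinearMap.ker Φ := by
    intro U hU m hm
    by_contra hcon
    apply hU
    obtain ⟨a, rfl⟩ := Submodule.Quotient.mk_surjective I m
    rw [LinearMap.mem_ker, hΦ] at hcon
    obtain ⟨r, c, hc, hrc⟩ := hback _ hcon
    obtain ⟨c', hc'⟩ := hkey (r * a)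
    have h1 := hI _ hc'
    have h2 : ρ (e * (r * a)) d = c • d := by
      rw [← mul_assoc, map_mul]; exact hrc
    rw [map_sub, LinearMap.sub_apply, h2, AlgHom.commutes, Module.algebraMap_end_apply,
      ← sub_smul, smul_eq_zero, or_iff_left hd, sub_eq_zero] at h1
    subst h1
    have h3 : (Submodule.Quotient.mk (e * (r * a)) : R ⧸ I) =
        Submodule.Quotient.mk (algebraMap k R c) := (Submodule.Quotient.eq I).mpr hc'
    have h4 : (Submodule.Quotient.mk (algebraMap k R c) : R ⧸ I) ∈ U := by
      rw [← h3, ← hmk, ← hmk]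
      exact U.smul_mem _ (U.smul_mem _ hm)
    have h5 := U.smul_mem (algebraMap k R c⁻¹) h4
    rw [hmk, ← map_mul, inv_mul_cancel₀ hc, map_one] at h5
    rw [eq_top_iff]
    intro z _
    obtain ⟨b, rfl⟩ := Submodule.Quotient.mk_surjective I z
    have := U.smul_mem b h5
    rwa [hmk, mul_one] at this
  have hco : IsCoatom (LinearMap.ker Φ) := by
    refine ⟨hne, fun U hU => ?_⟩
    by_contra h
    exact absurd (hmax U h) (not_le_of_gt hU)
  have hrad : sInf {U : Submodule R (R ⧸ I) | IsCoatom U} = LinearMap.ker Φ := by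
    apply le_antisymm
    · exact sInf_le hco
    · refine le_sInf fun U hU => ?_
      have h1 := hmax U hU.1
      rcases h1.lt_or_eq with h2 | h2
      · exact absurd (hU.2 _ h2) hne
      · exact h2.ge
  let φ := (Submodule.quotEquivOfEq _ _ hrad).trans (Φ.quotKerEquivOfSurjective hs)
  exact ⟨φ.toAddEquiv, fun r z => φ.map_smul r z⟩

end Head

section Sp

variable {k : Type} [Field k] {n : ℕ} {hn : 0 < n} {l : List ℕ} {N : ℕ}

/-- The basis vector of a tableau. -/
noncomputable def dl (k : Type) [Field k] {P : (Fin N → ℕ × ℕ) → Prop}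
    (T : {f : Fin N → ℕ × ℕ // P f}) : TabV k P :=
  Pi.single T 1

theorem dl_ne {P : (Fin N → ℕ × ℕ) → Prop} (T : {f : Fin N → ℕ × ℕ // P f}) : dl k T ≠ 0 := by
  intro h
  have := congrFun h T
  simp [dl] at this

theorem eOp_dl {P : (Fin N → ℕ × ℕ) → Prop} (T : {f : Fin N → ℕ × ℕ // P f})
    (μ : Fin N → Fin n) :
    eOpTab k n hn P μ (dl k T) = if resSeq n hn T.val = μ then dl k T else 0 := by
  funext S
  by_cases hST : S = T
  · subst hST
    simp only [eOpTab, LinearMap.pi_apply]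
    split_ifs <;> simp
  · simp only [eOpTab, LinearMap.pi_apply]
    split_ifs <;> simp [dl, Pi.single_apply, hST]

theorem tOp_dl {P : (Fin N → ℕ × ℕ) → Prop} (T : {f : Fin N → ℕ × ℕ // P f})
    (j : ℕ) (h : j + 1 < N) :
    tOpTab k P j h (dl k T) =
      if hh : P (swapEnt j h T.val) then dl k ⟨swapEnt j h T.val, hh⟩ else 0 := by
  funext S
  simp only [tOpTab, LinearMap.pi_apply]
  have key : swapEnt j h S.val = T.val ↔ S.val = swapEnt j h T.val := by
    constructor
    · intro h1; rw [← h1, swapEnt_swapEnt]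
    · intro h1; rw [h1, swapEnt_swapEnt]
  by_cases hS : S.val = swapEnt j h T.val
  · have h1 : P (swapEnt j h S.val) := by rw [key.mpr hS]; exact T.2
    have h2 : P (swapEnt j h T.val) := by rw [← hS]; exact S.2
    rw [dif_pos h1, dif_pos h2]
    have e1 : (⟨_, h1⟩ : {f : Fin N → ℕ × ℕ // P f}) = T := Subtype.ext (key.mpr hS)
    have e2 : (⟨_, h2⟩ : {f : Fin N → ℕ × ℕ // P f}) = S := Subtype.ext hS.symm
    rw [e1, e2]
    simp [dl]
  · have hR : (if hh : P (swapEnt j h T.val) then dl k ⟨swapEnt j h T.val, hh⟩ else 0) S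
        = (0 : k) := by
      split_ifs with hh
      · simp only [dl]
        rw [Pi.single_eq_of_ne]
        intro e; exact hS (congrArg Subtype.val e)
      · rfl
    rw [hR]
    split_ifs with hh
    · simp only [dl, LinearMap.proj_apply]
      rw [Pi.single_eq_of_ne]
      intro e; exact hS (key.mp (congrArg Subtype.val e))
    · rfl

theorem T0_swap_not (j : ℕ) (h : j + 1 < l.sum) (hs : sameBlock l j) :
    ¬ IsSYT l l.sum (swapEnt j h (T0 l)) := by
  obtain ⟨t, h1, h2⟩ := hs
  have ht : t < l.length := by
    by_contra hcon
    have : blockSize l t = 0 := by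
      unfold blockSize
      rw [List.getD_eq_default]; simp; omega
    omega
  obtain ⟨b1, b2⟩ := block_eq l (l.length - 1 - t) (by omega)
  rw [show l.length - 1 - (l.length - 1 - t) = t by omega] at b1 b2
  set i := l.length - 1 - t with hi
  intro hS
  let a : Fin l.sum := Fin.rev ⟨j, Nat.lt_of_succ_lt h⟩
  let b : Fin l.sum := Fin.rev ⟨j + 1, h⟩
  have ha : (a : ℕ) = l.sum - (j + 1) := by simp [a, Fin.rev]
  have hb : (b : ℕ) = l.sum - (j + 2) := by simp [b, Fin.rev]
  obtain ⟨ea1, ea2⟩ := rIC_eq l (p := a) (i := i)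
    (c := l.sum - (j + 1) - (l.take i).sum) a.2 (by omega) (by omega) (by omega)
  obtain ⟨eb1, eb2⟩ := rIC_eq l (p := b) (i := i)
    (c := l.sum - (j + 2) - (l.take i).sum) b.2 (by omega) (by omega) (by omega)
  have f1 : swapEnt j h (T0 l) a = T0 l b := by simp [swapEnt, a, b]
  have f2 : swapEnt j h (T0 l) b = T0 l a := by simp [swapEnt, a, b]
  have := hS.2.2.1 a b (by rw [f1, f2]; simp only [T0]; omega)
    (by rw [f1, f2]; simp only [T0]; omega)
  rw [Fin.lt_def] at this
  omega

theorem syt_finite (hn : 0 < n) (hdec : l.Chain' (· > ·)) (hle : ∀ x ∈ l, x ≤ n) :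
    Finite {f : Fin N → ℕ × ℕ // IsSYT l N f} := by
  apply Finite.of_injective (fun T : {f : Fin N → ℕ × ℕ // IsSYT l N f} => resSeq n hn T.val)
  intro S T h
  exact Subtype.ext (res_inj hn hdec hle S.2 T.2 h)

end Sp

theorem sp_is_head_of_convolution_B
    (k : Type) [Field k] (n : ℕ) (hn : 2 ≤ n)
    (Q : Fin n → Fin n → MvPolynomial (Fin 2) k)
    (hQ : QAdmissible k (AB n) (dB n) Q)
    (l : List ℕ) (hdec : l.Chain' (· > ·)) (hpos : ∀ x ∈ l, 0 < x)
    (hle : ∀ x ∈ l, x ≤ n)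
    -- for any action ρ of the quiver Hecke algebra on Sp(b) by the prescribed operators
    (ρ : RingQuot (Rel k Q (Set.univ : Set (Fin l.sum → Fin n))) →ₐ[k]
      Module.End k (TabV k (IsSYT l l.sum)))
    (hρe : ∀ μ : Fin l.sum → Fin n,
      ρ (RingQuot.mkAlgHom k _ (Eg k μ)) = eOpTab k n (by omega) (IsSYT l l.sum) μ)
    (hρx : ∀ p : Fin l.sum, ρ (RingQuot.mkAlgHom k _ (Xg k p)) = 0)
    (hρt : ∀ (j : ℕ) (h : j + 1 < l.sum),
      ρ (RingQuot.mkAlgHom k _ (Tg k j h)) = tOpTab k (IsSYT l l.sum) j h) :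
    -- Sp(b) is isomorphic, as a module over the quiver Hecke algebra, to the head
    -- of the convolution product Sp((λ_ℓ)) ∘ ⋯ ∘ Sp((λ₂)) ∘ Sp((λ₁))
    ∃ φ : ConvHead k n (by omega) Q l ≃+ TabV k (IsSYT l l.sum),
      ∀ (r : RingQuot (Rel k Q (Set.univ : Set (Fin l.sum → Fin n))))
        (z : ConvHead k n (by omega) Q l),
        φ (r • z) = ρ r (φ z) := by

  have hn0 : 0 < n := by omega
  let Tz : {f : Fin l.sum → ℕ × ℕ // IsSYT l l.sum f} := ⟨T0 l, T0_syt l⟩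
  let d : TabV k (IsSYT l l.sum) := dl k Tz
  have hde : ∀ μ, eOpTab k n hn0 (IsSYT l l.sum) μ d =
      if rs l.sum (nu0 n hn0 l) = μ then d else 0 := by
    intro μ
    rw [rs_nu0]
    exact eOp_dl Tz μ
  have hI : ∀ a ∈ convIdeal k n hn0 Q l, ρ a d = 0 := by
    intro a ha
    unfold convIdeal at ha
    induction ha using Submodule.span_induction with
    | mem z hz =>
      rcases hz with (⟨t, ht, μ, rfl⟩ | ⟨p, rfl⟩) | ⟨j, h, hs, rfl⟩
      · have h1 : ρ (imgE k n Q l t μ) d =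
            if BlockMatch n l t μ (rs l.sum (nu0 n hn0 l)) then d else 0 := by
          rw [imgE, map_sum, map_sum, LinearMap.sum_apply]
          rw [Finset.sum_congr rfl (fun ν _ => by rw [hρe, hde])]
          rw [Finset.sum_ite_eq]
          simp
        have h2 : BlockMatch n l t μ (rs l.sum (nu0 n hn0 l)) ↔
            ∀ q, μ q = localRes n hn0 l t q := by
          constructor
          · intro hm q
            obtain ⟨hlt, he⟩ := nu0_block n hn0 l t ht q
            rw [← he, ← hm q hlt]
            rfl
          · intro hm q hq
            rw [hm q, ← (nu0_block n hn0 l t ht q).2]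
            rfl
        rw [map_sub, LinearMap.sub_apply, h1]
        by_cases hc : ∀ q, μ q = localRes n hn0 l t q
        · rw [if_pos hc, if_pos (h2.mpr hc), map_one]
          exact sub_self d
        · rw [if_neg hc, if_neg (fun h => hc (h2.mp h)), map_zero]
          exact sub_self 0
      · rw [hρx]; rfl
      · rw [hρt, tOp_dl, dif_neg (T0_swap_not j h hs)]
    | zero => rw [map_zero]; rfl
    | add x y _ _ hx hy => rw [map_add, LinearMap.add_apply, hx, hy, add_zero]
    | smul a x _ hx =>
      rw [smul_eq_mul, map_mul, Module.End.mul_apply, hx, map_zero]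
  have hfin : Finite {f : Fin l.sum → ℕ × ℕ // IsSYT l l.sum f} := syt_finite hn0 hdec hle
  have hfwd : ∀ f (hf : IsSYT l l.sum f), ∃ r : RR k l.sum Q, ρ r d = dl k ⟨f, hf⟩ := by
    intro f hf
    refine syt_induct (l := l) (Pr := fun f => ∀ hf : IsSYT l l.sum f,
      ∃ r : RR k l.sum Q, ρ r d = dl k ⟨f, hf⟩) (T0 l) (T0_mono l) (T0_range l) ?_ ?_ f hf hf
    · intro _
      exact ⟨1, by rw [map_one]; rfl⟩
    · intro f j h hf _ ih hs
      obtain ⟨r, hr⟩ := ih hf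
      refine ⟨pr Q (Tg k j h) * r, ?_⟩
      rw [map_mul, Module.End.mul_apply, hr, hρt, tOp_dl, dif_pos hs]
  have hbwd : ∀ f (hf : IsSYT l l.sum f), ∃ r : RR k l.sum Q, ρ r (dl k ⟨f, hf⟩) = d := by
    intro f hf
    refine syt_induct (l := l) (Pr := fun f => ∀ hf : IsSYT l l.sum f,
      ∃ r : RR k l.sum Q, ρ r (dl k ⟨f, hf⟩) = d) (T0 l) (T0_mono l) (T0_range l) ?_ ?_ f hf hf
    · intro _
      exact ⟨1, by rw [map_one]; rfl⟩
    · intro f j h hf _ ih hs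
      obtain ⟨r, hr⟩ := ih hf
      refine ⟨r * pr Q (Tg k j h), ?_⟩
      have hss : IsSYT l l.sum (swapEnt j h (swapEnt j h f)) := by
        rw [swapEnt_swapEnt]; exact hf
      rw [map_mul, Module.End.mul_apply, hρt, tOp_dl, dif_pos hss]
      rw [← hr]
      congr 2
      exact Subtype.ext (swapEnt_swapEnt h f)
  have hsurj : ∀ w, ∃ r : RR k l.sum Q, ρ r d = w := by
    intro w
    have := Fintype.ofFinite {f : Fin l.sum → ℕ × ℕ // IsSYT l l.sum f}
    choose r hr using hfwd
    refine ⟨∑ T : {f : Fin l.sum → ℕ × ℕ // IsSYT l l.sum f}, w T • r T.1 T.2, ?_⟩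
    rw [map_sum, LinearMap.sum_apply]
    conv_rhs => rw [pi_eq_sum_univ w]
    refine Finset.sum_congr rfl fun T _ => ?_
    rw [map_smul, LinearMap.smul_apply, hr]
    congr 1
    funext S
    simp only [dl, Pi.single_apply]
    exact if_congr eq_comm rfl rfl
  have hback : ∀ w, w ≠ 0 → ∃ (r : RR k l.sum Q) (c : k), c ≠ 0 ∧
      ρ (pr Q (Eg k (rs l.sum (nu0 n hn0 l))) * r) w = c • d := by
    intro w hw
    obtain ⟨T, hT⟩ := Function.ne_iff.mp hw
    obtain ⟨r, hr⟩ := hbwd T.1 T.2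
    refine ⟨r * pr Q (Eg k (resSeq n hn0 T.val)), w T, hT, ?_⟩
    have h1 : eOpTab k n hn0 (IsSYT l l.sum) (resSeq n hn0 T.val) w = w T • dl k T := by
      funext S
      simp only [eOpTab, LinearMap.pi_apply]
      by_cases hST : S = T
      · subst hST
        simp [dl]
      · rw [if_neg]
        · simp [dl, hST]
        · intro h
          exact hST (Subtype.ext (res_inj hn0 hdec hle S.2 T.2 h))
    rw [map_mul, map_mul, Module.End.mul_apply, Module.End.mul_apply, hρe, hρe, h1, map_smul,
      hr, map_smul, hde, if_pos rfl]
  exact head_abstract (k := k) (convIdeal k n hn0 Q l) ρ d (dl_ne Tz)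
    (pr Q (Eg k (rs l.sum (nu0 n hn0 l)))) hI hsurj
    (fun r => key_conv n hn0 hn Q l hdec hpos hle r) hback

end QHA
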